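/- arXiv:2003.12706 — 3 statements merged into one kernel-verified Lean document; each statement's English description precedes it below -/
import Mathlib

section
/- For |q|<1, the Rogers–Ramanujan function G(q) = ∑_{n≥0} q^{n^2}/((1-q)(1-q^2)⋯(1-q^n)) equals the infinite product 1/∏_{k≥0}((1-q^{5k+1})(1-q^{5k+4})). -/
/-!
The proof is by iterating Bailey's lemma, with Jacobi's triple product to sum the resulting theta
series. Write `(q)_m = (1 - q)⋯(1 - q ^ m)`, with `1 / (q)_m = 0` for `m < 0`.

* The finite triple product (`finite_triple_product`) is
  `∑_k (-1)^k z^k q^{k(k-1)/2} / ((q)_{n-k} (q)_{n+k}) = (z; q)_n (q/z; q)_n / (q)_{2n}`.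
  At `z = 1` the right side vanishes for `n > 0` (`unit_bailey`).
* A form of the q-Vandermonde sum (`q_vandermonde`) shows that replacing the coefficients `f k` by
  `q^{k²} f k` turns the sums `β_n = ∑_k f k / ((q)_{n-k} (q)_{n+k})` into
  `∑_j q^{j²} β_j / (q)_{n-j}` (`bailey_step`).

Two Bailey steps starting from `β_n = δ_{n,0}` give
`∑_j q^{j²} / ((q)_{n-j} (q)_j) = ∑_k (-1)^k q^{k(5k-1)/2} / ((q)_{n-k} (q)_{n+k})`.
As `n → ∞`, dominated convergence gives `G(q) = Θ / (q; q)_∞` with `Θ = ∑_k (-1)^k q^{k(5k-1)/2}`.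
The limit of the finite triple product with base `q^5` and `z = q^2` gives
`Θ = (q^2; q^5)_∞ (q^3; q^5)_∞ (q^5; q^5)_∞`, and sorting the factors of `(q; q)_∞` by exponent
modulo `5` finishes the proof. Integer powers of `q` are used throughout, so `q = 0` is treated
separately.
-/

noncomputable def qp (a q : ℂ) : ℂ := ∏' k : ℕ, (1 - a * q ^ k)

noncomputable def GG (q : ℂ) : ℂ := 1 / (qp q (q ^ 5) * qp (q ^ 4) (q ^ 5))

noncomputable def HH (q : ℂ) : ℂ := 1 / (qp (q ^ 2) (q ^ 5) * qp (q ^ 3) (q ^ 5))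

noncomputable def RR (q : ℂ) : ℂ :=
  (qp q (q ^ 5) * qp (q ^ 4) (q ^ 5)) / (qp (q ^ 2) (q ^ 5) * qp (q ^ 3) (q ^ 5))

noncomputable def phi (q : ℂ) : ℂ := ∑' n : ℤ, q ^ (n.natAbs ^ 2)

noncomputable def psi (q : ℂ) : ℂ := ∑' n : ℕ, q ^ (n * (n + 1) / 2)

open Filter Topology

namespace RogersRamanujan

/-! ### Inverse q-factorials and theta coefficients -/

/-- `1 / (q)_m = 1 / ((1 - q)⋯(1 - q ^ m))` for an integer `m`, extended by `0` to `m < 0`. -/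
noncomputable def qInv (q : ℂ) (m : ℤ) : ℂ :=
  if m < 0 then 0 else (∏ i ∈ Finset.range m.toNat, (1 - q ^ (i + 1)))⁻¹

/-- `(-1)^k q^{k(k-1)/2}`, the coefficient of `z ^ k` in the theta series with base `q`; the integer
division is exact. -/
noncomputable def thetaCoeff (q : ℂ) (k : ℤ) : ℂ := (-1) ^ k * q ^ (k * (k - 1) / 2)

variable {q : ℂ}

lemma one_sub_pow_ne_zero (hq : ‖q‖ < 1) (n : ℕ) : 1 - q ^ (n + 1) ≠ 0 := by
  intro h
  have h1 : ‖q ^ (n + 1)‖ < 1 := by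
    rw [norm_pow]
    exact pow_lt_one₀ (norm_nonneg _) hq (by omega)
  rw [← sub_eq_zero.mp h, norm_one] at h1
  exact lt_irrefl _ h1

lemma qInv_of_neg {m : ℤ} (h : m < 0) : qInv q m = 0 := by simp [qInv, h]

lemma qInv_natCast (n : ℕ) : qInv q n = (∏ i ∈ Finset.range n, (1 - q ^ (i + 1)))⁻¹ := by
  simp [qInv]

@[simp] lemma qInv_zero : qInv q 0 = 1 := by simp [qInv]

lemma qInv_natCast_ne_zero (hq : ‖q‖ < 1) (n : ℕ) : qInv q n ≠ 0 := by
  rw [qInv_natCast]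
  exact inv_ne_zero (Finset.prod_ne_zero_iff.mpr fun i _ => one_sub_pow_ne_zero hq i)

/-- The recurrence for `1 / (q)_m`, valid without restriction on the sign of `m`. -/
lemma qInv_sub_one (hq : ‖q‖ < 1) (m : ℤ) : qInv q (m - 1) = (1 - q ^ m) * qInv q m := by
  rcases lt_trichotomy m 0 with h | h | h
  · rw [qInv_of_neg h, qInv_of_neg (by omega), mul_zero]
  · subst h
    rw [qInv_of_neg (by omega)]
    simp
  · obtain ⟨n, rfl⟩ : ∃ n : ℕ, m = (n + 1 : ℕ) := ⟨(m - 1).toNat, by omega⟩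
    have h1 : ((n + 1 : ℕ) : ℤ) - 1 = n := by push_cast; ring
    rw [h1, qInv_natCast, qInv_natCast, Finset.prod_range_succ, zpow_natCast]
    have := one_sub_pow_ne_zero hq n
    field_simp

lemma thetaCoeff_add_one (hq0 : q ≠ 0) (k : ℤ) :
    thetaCoeff q (k + 1) = -q ^ k * thetaCoeff q k := by
  have h : (k + 1) * (k + 1 - 1) / 2 = k * (k - 1) / 2 + k := by
    rw [show (k + 1) * (k + 1 - 1) = k * (k - 1) + k * 2 by ring,
      Int.add_mul_ediv_right _ _ (by norm_num)]
  rw [thetaCoeff, thetaCoeff, h, zpow_add₀ hq0, zpow_add₀ (by norm_num : (-1 : ℂ) ≠ 0)]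
  ring

lemma thetaCoeff_sub_one (hq0 : q ≠ 0) (k : ℤ) :
    thetaCoeff q (k - 1) = -(q / q ^ k) * thetaCoeff q k := by
  have h := thetaCoeff_add_one hq0 (k - 1)
  rw [sub_add_cancel, zpow_sub₀ hq0, zpow_one] at h
  rw [h]
  have := zpow_ne_zero k hq0
  field_simp

lemma summable_of_bounded_support {f : ℤ → ℂ} (a b : ℤ) (h : ∀ k, k < a ∨ b < k → f k = 0) :
    Summable f := by
  apply summable_of_ne_finset_zero (s := Finset.Icc a b)
  intro k hk
  apply h
  rw [Finset.mem_Icc] at hk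
  omega

lemma summable_bailey (f : ℤ → ℂ) (n : ℤ) :
    Summable fun k : ℤ => f k * (qInv q (n - k) * qInv q (n + k)) := by
  apply summable_of_bounded_support (-n) n
  rintro k (hk | hk)
  · rw [qInv_of_neg (by omega : n + k < 0)]; ring
  · rw [qInv_of_neg (by omega : n - k < 0)]; ring

/-! ### The finite triple product -/

theorem finite_triple_product (hq : ‖q‖ < 1) (hq0 : q ≠ 0) {z : ℂ} (hz : z ≠ 0) (n : ℕ) :
    ∑' k : ℤ, thetaCoeff q k * z ^ k * (qInv q (n - k) * qInv q (n + k)) =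
      (∏ i ∈ Finset.range n, (1 - z * q ^ i)) * (∏ i ∈ Finset.range n, (1 - q ^ (i + 1) / z)) *
        qInv q (2 * n : ℕ) := by
  induction n with
  | zero =>
    rw [tsum_eq_single 0]
    · simp [thetaCoeff]
    · intro k hk
      rcases lt_or_gt_of_ne hk with h | h
      · rw [qInv_of_neg (by push_cast; omega : ((0 : ℕ) : ℤ) + k < 0)]; ring
      · rw [qInv_of_neg (by push_cast; omega : ((0 : ℕ) : ℤ) - k < 0)]; ring
  | succ n ih =>
    set t : ℕ → ℤ → ℂ :=
      fun n k => thetaCoeff q k * z ^ k * (qInv q (n - k) * qInv q (n + k)) with ht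
    have hs : ∀ n, Summable (t n) := fun n => summable_bailey _ _
    -- comparison of the coefficients of `z ^ k` in
    -- `(1 - q^{2n+1}) (1 - q^{2n+2}) J_{n+1} = (1 - z q^n) (1 - q^{n+1} / z) J_n`
    have key : ∀ k, (1 - q ^ (2 * n + 1)) * (1 - q ^ (2 * n + 2)) * t (n + 1) k =
        (1 + q ^ (2 * n + 1)) * t n k - z * q ^ n * t n (k - 1)
          - q ^ (n + 1) / z * t n (k + 1) := by
      intro k
      simp only [ht]
      have e1 : qInv q ((n : ℤ) - k) =
          (1 - q ^ ((n : ℤ) + 1 - k)) * qInv q ((n : ℤ) + 1 - k) := by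
        rw [← qInv_sub_one hq]; congr 1; ring
      have e2 : qInv q ((n : ℤ) + k) =
          (1 - q ^ ((n : ℤ) + 1 + k)) * qInv q ((n : ℤ) + 1 + k) := by
        rw [← qInv_sub_one hq]; congr 1; ring
      have e3 : qInv q ((n : ℤ) - (k + 1)) =
          (1 - q ^ ((n : ℤ) - k)) * qInv q ((n : ℤ) - k) := by
        rw [← qInv_sub_one hq]; congr 1; ring
      have e4 : qInv q ((n : ℤ) + (k - 1)) =
          (1 - q ^ ((n : ℤ) + k)) * qInv q ((n : ℤ) + k) := by
        rw [← qInv_sub_one hq]; congr 1; ring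
      rw [e3, e4, e1, e2, thetaCoeff_add_one hq0, thetaCoeff_sub_one hq0, zpow_add_one₀ hz,
        zpow_sub_one₀ hz]
      rw [show (n : ℤ) - (k - 1) = n + 1 - k by ring, show (n : ℤ) + (k + 1) = n + 1 + k by ring]
      push_cast
      generalize qInv q ((n : ℤ) + 1 - k) = E1
      generalize qInv q ((n : ℤ) + 1 + k) = E2
      simp only [zpow_add₀ hq0, zpow_sub₀ hq0, zpow_one, zpow_natCast]
      have := zpow_ne_zero k hq0
      field_simp
      ring
    have h1 := (hs n).mul_left (1 + q ^ (2 * n + 1))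
    have h2 : Summable fun k => z * q ^ n * t n (k - 1) :=
      (((Equiv.subRight (1 : ℤ)).summable_iff).mpr (hs n)).mul_left _
    have h3 : Summable fun k => q ^ (n + 1) / z * t n (k + 1) :=
      (((Equiv.addRight (1 : ℤ)).summable_iff).mpr (hs n)).mul_left _
    have hsum : (1 - q ^ (2 * n + 1)) * (1 - q ^ (2 * n + 2)) * ∑' k, t (n + 1) k =
        (1 - z * q ^ n) * (1 - q ^ (n + 1) / z) * ∑' k, t n k := by
      rw [← tsum_mul_left, tsum_congr key, (h1.sub h2).tsum_sub h3, h1.tsum_sub h2,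
        tsum_mul_left, tsum_mul_left, tsum_mul_left,
        show ∑' k, t n (k - 1) = ∑' k, t n k from (Equiv.subRight (1 : ℤ)).tsum_eq (t n),
        show ∑' k, t n (k + 1) = ∑' k, t n k from (Equiv.addRight (1 : ℤ)).tsum_eq (t n)]
      field_simp
      ring
    have hE : qInv q (2 * n : ℕ) =
        (1 - q ^ (2 * n + 1)) * (1 - q ^ (2 * n + 2)) * qInv q (2 * (n + 1) : ℕ) := by
      have a1 := qInv_sub_one hq ((2 * n + 1 : ℕ) : ℤ)
      have a2 := qInv_sub_one hq ((2 * n + 2 : ℕ) : ℤ)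
      rw [zpow_natCast] at a1 a2
      rw [show (((2 * n + 1 : ℕ) : ℤ) - 1) = (2 * n : ℕ) by push_cast; ring] at a1
      rw [show (((2 * n + 2 : ℕ) : ℤ) - 1) = (2 * n + 1 : ℕ) by push_cast; ring] at a2
      rw [a1, a2, mul_assoc]
      rfl
    have hne := mul_ne_zero (one_sub_pow_ne_zero hq (2 * n)) (one_sub_pow_ne_zero hq (2 * n + 1))
    apply mul_left_cancel₀ hne
    refine hsum.trans ?_
    rw [show ∑' k, t n k = _ from ih, hE, Finset.prod_range_succ, Finset.prod_range_succ]
    ring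

/-- The case `z = 1` of the finite triple product: `β_n = δ_{n,0}` for the coefficients
`(-1)^k q^{k(k-1)/2}`. -/
lemma unit_bailey (hq : ‖q‖ < 1) (hq0 : q ≠ 0) (n : ℕ) :
    ∑' k : ℤ, thetaCoeff q k * (qInv q (n - k) * qInv q (n + k)) = if n = 0 then 1 else 0 := by
  have h := finite_triple_product hq hq0 one_ne_zero n
  simp only [one_zpow, mul_one] at h
  rw [h]
  rcases n with _ | n
  · simp
  · rw [Finset.prod_eq_zero (i := 0) (by simp) (by simp)]
    simp

/-! ### The Bailey step -/

/-- A form of the q-Vandermonde sum: `∑_i q^{i(i+m)} / ((q)_{N-i} (q)_i (q)_{i+m})` equals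
`1 / ((q)_N (q)_{N+m})`. -/
lemma q_vandermonde (hq : ‖q‖ < 1) (hq0 : q ≠ 0) (N : ℕ) (m : ℤ) :
    ∑' i : ℤ, q ^ (i * (i + m)) * (qInv q (N - i) * qInv q i * qInv q (i + m)) =
      qInv q N * qInv q (N + m) := by
  induction N generalizing m with
  | zero =>
    rw [tsum_eq_single 0]
    · simp
    · intro k hk
      rcases lt_or_gt_of_ne hk with h | h
      · rw [qInv_of_neg h]; ring
      · rw [qInv_of_neg (by push_cast; omega : ((0 : ℕ) : ℤ) - k < 0)]; ring
  | succ N ih =>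
    -- From `1 - q^{N+1} = (1 - q^i) + q^i (1 - q^{N+1-i})` the sum splits in two; shifting `i` by
    -- one in the first part makes the two parts combine into the sum for `(N, m + 1)`.
    set a : ℤ → ℂ := fun i =>
      q ^ (i * (i + m)) * (qInv q ((N + 1 : ℕ) - i) * qInv q (i - 1) * qInv q (i + m)) with ha
    set b : ℤ → ℂ := fun i =>
      q ^ (i * (i + m)) * q ^ i * (qInv q (N - i) * qInv q i * qInv q (i + m)) with hb
    have hsa : Summable a := by
      apply summable_of_bounded_support 0 (N + 1)
      rintro k (hk | hk)
      · simp only [ha]; rw [qInv_of_neg (by omega : k - 1 < 0)]; ring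
      · simp only [ha]; rw [qInv_of_neg (by push_cast; omega : ((N + 1 : ℕ) : ℤ) - k < 0)]; ring
    have hsb : Summable b := by
      apply summable_of_bounded_support 0 N
      rintro k (hk | hk)
      · simp only [hb]; rw [qInv_of_neg hk]; ring
      · simp only [hb]; rw [qInv_of_neg (by omega : (N : ℤ) - k < 0)]; ring
    have hab : ∀ i : ℤ, (1 - q ^ (N + 1)) *
        (q ^ (i * (i + m)) * (qInv q ((N + 1 : ℕ) - i) * qInv q i * qInv q (i + m))) =
        a i + b i := by
      intro i
      simp only [ha, hb]
      have e : qInv q ((N : ℤ) - i) =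
          (1 - q ^ (((N + 1 : ℕ) : ℤ) - i)) * qInv q (((N + 1 : ℕ) : ℤ) - i) := by
        rw [← qInv_sub_one hq]; congr 1; push_cast; ring
      rw [e, qInv_sub_one hq i, zpow_sub₀ hq0, zpow_natCast]
      have := zpow_ne_zero i hq0
      field_simp
      ring
    have hcomb : ∀ i : ℤ, a (i + 1) + b i =
        q ^ (i * (i + (m + 1))) * (qInv q (N - i) * qInv q i * qInv q (i + (m + 1))) := by
      intro i
      simp only [ha, hb]
      have e : qInv q (i + m) = (1 - q ^ (i + (m + 1))) * qInv q (i + (m + 1)) := by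
        rw [← qInv_sub_one hq]; congr 1; ring
      rw [e, show ((N + 1 : ℕ) : ℤ) - (i + 1) = N - i by push_cast; ring,
        show i + 1 - 1 = i by ring, show i + 1 + m = i + (m + 1) by ring,
        show (i + 1) * (i + (m + 1)) = i * (i + (m + 1)) + (i + (m + 1)) by ring,
        show i * (i + (m + 1)) = i * (i + m) + i by ring, zpow_add₀ hq0 _ (i + (m + 1)),
        zpow_add₀ hq0 _ i]
      ring
    have hsa' : Summable fun i => a (i + 1) := ((Equiv.addRight (1 : ℤ)).summable_iff).mpr hsa
    apply mul_left_cancel₀ (one_sub_pow_ne_zero hq N)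
    rw [← tsum_mul_left, tsum_congr hab, hsa.tsum_add hsb,
      ← show ∑' k, a (k + 1) = ∑' k, a k from (Equiv.addRight (1 : ℤ)).tsum_eq a,
      ← hsa'.tsum_add hsb, tsum_congr hcomb, ih (m + 1)]
    have e := qInv_sub_one hq ((N + 1 : ℕ) : ℤ)
    rw [show ((N + 1 : ℕ) : ℤ) - 1 = N by push_cast; ring, zpow_natCast] at e
    rw [e, show (N : ℤ) + (m + 1) = (N + 1 : ℕ) + m by push_cast; ring]
    ring

/-- The q-Vandermonde sum after the substitution `i = j - k`, `N = n - k`, `m = 2 k`. -/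
lemma q_vandermonde_sym (hq : ‖q‖ < 1) (hq0 : q ≠ 0) (n : ℕ) (k : ℤ) :
    ∑ j ∈ Finset.range (n + 1),
      q ^ (j ^ 2) * qInv q ((n : ℤ) - j) * (qInv q (j - k) * qInv q (j + k)) =
      q ^ (k ^ 2) * (qInv q (n - k) * qInv q (n + k)) := by
  set g : ℤ → ℂ := fun j =>
    q ^ (j ^ 2) * qInv q ((n : ℤ) - j) * (qInv q (j - k) * qInv q (j + k)) with hg
  have hvan : ∀ j : ℤ, j < 0 ∨ (n : ℤ) < j → g j = 0 := by
    rintro j (hj | hj)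
    · simp only [hg]
      rcases le_total 0 k with h | h
      · rw [qInv_of_neg (by omega : j - k < 0)]; ring
      · rw [qInv_of_neg (by omega : j + k < 0)]; ring
    · simp only [hg]
      rw [qInv_of_neg (by omega : (n : ℤ) - j < 0)]; ring
  have h1 : ∑ j ∈ Finset.range (n + 1),
      q ^ (j ^ 2) * qInv q ((n : ℤ) - j) * (qInv q (j - k) * qInv q (j + k)) = ∑' j, g j := by
    rw [tsum_eq_sum (s := (Finset.range (n + 1)).map Nat.castEmbedding), Finset.sum_map]
    · apply Finset.sum_congr rfl
      intro j _
      simp only [hg, Nat.castEmbedding_apply]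
      rw [← zpow_natCast q (j ^ 2)]
      push_cast
      rfl
    · intro j hj
      apply hvan
      by_contra hcon
      apply hj
      rw [Finset.mem_map]
      exact ⟨j.toNat, by rw [Finset.mem_range]; omega, by simp; omega⟩
  rw [h1, ← (Equiv.addRight k).tsum_eq g]
  have h2 : ∀ i, g (Equiv.addRight k i) = q ^ (k ^ 2) *
      (q ^ (i * (i + 2 * k)) * (qInv q ((n - k) - i) * qInv q i * qInv q (i + 2 * k))) := by
    intro i
    simp only [hg, Equiv.coe_addRight]
    rw [show (i + k) ^ 2 = k ^ 2 + i * (i + 2 * k) by ring, zpow_add₀ hq0,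
      show (n : ℤ) - (i + k) = n - k - i by ring, show i + k - k = i by ring,
      show i + k + k = i + 2 * k by ring]
    ring
  rw [tsum_congr h2, tsum_mul_left]
  congr 1
  rcases lt_or_ge ((n : ℤ) - k) 0 with h | h
  · rw [qInv_of_neg h, zero_mul]
    refine (tsum_congr fun i => ?_).trans tsum_zero
    rcases lt_or_ge i 0 with hi | hi
    · rw [qInv_of_neg hi]; ring
    · rw [qInv_of_neg (by omega : (n : ℤ) - k - i < 0)]; ring
  · obtain ⟨N, hN⟩ := Int.eq_ofNat_of_zero_le h
    have := q_vandermonde hq hq0 N (2 * k)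
    rw [hN, this]
    congr 2
    omega

/-- Bailey's lemma relative to `a = 1` with both parameters sent to infinity. -/
lemma bailey_step (hq : ‖q‖ < 1) (hq0 : q ≠ 0) (f : ℤ → ℂ) (n : ℕ) :
    ∑' k : ℤ, q ^ (k ^ 2) * f k * (qInv q (n - k) * qInv q (n + k)) =
      ∑ j ∈ Finset.range (n + 1), q ^ (j ^ 2) * qInv q ((n : ℤ) - j) *
        ∑' k : ℤ, f k * (qInv q (j - k) * qInv q (j + k)) := by
  simp_rw [← tsum_mul_left]
  rw [← Summable.tsum_finsetSum]
  · apply tsum_congr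
    intro k
    rw [mul_right_comm, ← q_vandermonde_sym hq hq0, Finset.sum_mul]
    apply Finset.sum_congr rfl
    intro j _
    ring
  · intro j _
    exact (summable_bailey f j).mul_left _

theorem finite_rogers_ramanujan (hq : ‖q‖ < 1) (hq0 : q ≠ 0) (n : ℕ) :
    ∑' k : ℤ, q ^ (k ^ 2) * (q ^ (k ^ 2) * thetaCoeff q k) * (qInv q (n - k) * qInv q (n + k)) =
      ∑ j ∈ Finset.range (n + 1), q ^ (j ^ 2) * qInv q ((n : ℤ) - j) * qInv q j := by
  rw [bailey_step hq hq0]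
  apply Finset.sum_congr rfl
  intro j _
  congr 1
  rw [bailey_step hq hq0, Finset.sum_eq_single 0]
  · have := unit_bailey hq hq0 0
    rw [this]
    simp
  · intro i _ hi
    rw [unit_bailey hq hq0, if_neg hi, mul_zero]
  · simp

/-! ### Limits -/

lemma summable_pow_mul_add (hq : ‖q‖ < 1) {a : ℕ} (ha : 0 < a) (b : ℕ) :
    Summable fun k : ℕ => ‖-q ^ (a * k + b)‖ := by
  have h : Summable fun k : ℕ => (‖q‖ ^ a) ^ k * ‖q‖ ^ b :=
    (summable_geometric_of_lt_one (by positivity)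
      (pow_lt_one₀ (norm_nonneg _) hq ha.ne')).mul_right _
  refine h.congr fun k => ?_
  rw [norm_neg, norm_pow, pow_add, pow_mul]

lemma multipliable_one_sub (hq : ‖q‖ < 1) {a : ℕ} (ha : 0 < a) (b : ℕ) :
    Multipliable fun k : ℕ => 1 - q ^ (a * k + b) := by
  simpa [sub_eq_add_neg] using multipliable_one_add_of_summable (summable_pow_mul_add hq ha b)

lemma tendsto_prod (hq : ‖q‖ < 1) {a : ℕ} (ha : 0 < a) (b : ℕ) :
    Tendsto (fun n => ∏ k ∈ Finset.range n, (1 - q ^ (a * k + b))) atTop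
      (𝓝 (∏' k : ℕ, (1 - q ^ (a * k + b)))) :=
  (multipliable_one_sub hq ha b).hasProd.tendsto_prod_nat

lemma tprod_one_sub_ne_zero (hq : ‖q‖ < 1) {a : ℕ} (ha : 0 < a) (b : ℕ) :
    ∏' k : ℕ, (1 - q ^ (a * k + (b + 1))) ≠ 0 := by
  have := tprod_one_add_ne_zero_of_summable (f := fun k : ℕ => -q ^ (a * k + (b + 1)))
    (fun k => by
      rw [← sub_eq_add_neg]
      exact one_sub_pow_ne_zero hq (a * k + b)) (summable_pow_mul_add hq ha (b + 1))
  simpa [sub_eq_add_neg] using this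

lemma tendsto_qInv_natCast (hq : ‖q‖ < 1) :
    Tendsto (fun n : ℕ => qInv q n) atTop (𝓝 (∏' k : ℕ, (1 - q ^ (k + 1)))⁻¹) := by
  have h := (tendsto_prod hq one_pos 1).inv₀ (tprod_one_sub_ne_zero hq one_pos 0)
  simpa [qInv_natCast] using h

lemma tendsto_qInv (hq : ‖q‖ < 1) :
    Tendsto (qInv q) atTop (𝓝 (∏' k : ℕ, (1 - q ^ (k + 1)))⁻¹) := by
  have h : Tendsto Int.toNat atTop atTop := by
    rw [tendsto_atTop]
    intro b
    filter_upwards [eventually_ge_atTop (b : ℤ)] with m hm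
    omega
  refine ((tendsto_qInv_natCast hq).comp h).congr' ?_
  filter_upwards [eventually_ge_atTop (0 : ℤ)] with m hm
  simp [Int.toNat_of_nonneg hm]

lemma exists_norm_qInv_le (hq : ‖q‖ < 1) : ∃ C : ℝ, 0 ≤ C ∧ ∀ m, ‖qInv q m‖ ≤ C := by
  obtain ⟨C, hC⟩ := (tendsto_qInv_natCast hq).norm.bddAbove_range
  have h : ∀ n : ℕ, ‖qInv q n‖ ≤ C := fun n => hC ⟨n, rfl⟩
  have hC0 : 0 ≤ C := (norm_nonneg _).trans (h 0)
  refine ⟨C, hC0, fun m => ?_⟩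
  rcases lt_or_ge m 0 with hm | hm
  · rw [qInv_of_neg hm, norm_zero]
    exact hC0
  · obtain ⟨n, rfl⟩ := Int.eq_ofNat_of_zero_le hm
    exact h n

lemma tendsto_bailey (hq : ‖q‖ < 1) {f : ℤ → ℂ} (hf : Summable fun k => ‖f k‖) :
    Tendsto (fun n : ℕ => ∑' k : ℤ, f k * (qInv q (n - k) * qInv q (n + k))) atTop
      (𝓝 ((∑' k, f k) * ((∏' k : ℕ, (1 - q ^ (k + 1)))⁻¹ * (∏' k : ℕ, (1 - q ^ (k + 1)))⁻¹))) := by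
  obtain ⟨C, hC0, hC⟩ := exists_norm_qInv_le hq
  rw [← tsum_mul_right]
  apply tendsto_tsum_of_dominated_convergence (bound := fun k => ‖f k‖ * (C * C)) (hf.mul_right _)
  · intro k
    refine Tendsto.const_mul _ (Tendsto.mul ?_ ?_)
    · exact (tendsto_qInv hq).comp
        (tendsto_atTop_add_const_right _ (-k) tendsto_natCast_atTop_atTop)
    · exact (tendsto_qInv hq).comp
        (tendsto_atTop_add_const_right _ k tendsto_natCast_atTop_atTop)
  · refine Eventually.of_forall fun n k => ?_
    rw [norm_mul, norm_mul]
    gcongr <;> apply hC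

lemma tendsto_convolution (hq : ‖q‖ < 1) :
    Tendsto (fun n : ℕ => ∑ j ∈ Finset.range (n + 1),
      q ^ (j ^ 2) * qInv q ((n : ℤ) - j) * qInv q j) atTop
      (𝓝 ((∏' k : ℕ, (1 - q ^ (k + 1)))⁻¹ * ∑' j : ℕ, q ^ (j ^ 2) * qInv q j)) := by
  obtain ⟨C, hC0, hC⟩ := exists_norm_qInv_le hq
  have h : ∀ n : ℕ, ∑ j ∈ Finset.range (n + 1), q ^ (j ^ 2) * qInv q ((n : ℤ) - j) * qInv q j =
      ∑' j : ℕ, qInv q ((n : ℤ) - j) * (q ^ (j ^ 2) * qInv q j) := by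
    intro n
    rw [tsum_eq_sum (s := Finset.range (n + 1))]
    · apply Finset.sum_congr rfl
      intro j _
      ring
    · intro j hj
      rw [Finset.mem_range] at hj
      rw [qInv_of_neg (by omega : (n : ℤ) - j < 0), zero_mul]
  simp_rw [h]
  rw [← tsum_mul_left]
  apply tendsto_tsum_of_dominated_convergence (bound := fun j : ℕ => C * (‖q‖ ^ j * C))
  · exact ((summable_geometric_of_lt_one (norm_nonneg _) hq).mul_right _).mul_left _
  · intro j
    exact ((tendsto_qInv hq).comp
      (tendsto_atTop_add_const_right _ (-(j : ℤ)) tendsto_natCast_atTop_atTop)).mul_const _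
  · refine Eventually.of_forall fun n j => ?_
    rw [norm_mul, norm_mul, norm_pow]
    have h2 : ‖q‖ ^ (j ^ 2) ≤ ‖q‖ ^ j :=
      pow_le_pow_of_le_one (norm_nonneg _) hq.le (Nat.le_self_pow (by norm_num) j)
    gcongr <;> apply hC

/-! ### The theta series and the product side -/

/-- Both the second Bailey iterate and the triple product with base `q^5`, `z = q^2` have the
coefficients `(-1)^k q^{k(5k-1)/2}`. -/
lemma thetaCoeff_pow_five (hq0 : q ≠ 0) (k : ℤ) :
    thetaCoeff (q ^ 5) k * (q ^ 2) ^ k = q ^ (k ^ 2) * (q ^ (k ^ 2) * thetaCoeff q k) := by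
  have h : Even (k * (k - 1)) := Int.even_mul_pred_self k
  obtain ⟨r, hr⟩ := h
  have hr2 : k * (k - 1) / 2 = r := by omega
  have e1 : (q ^ 5) ^ r = q ^ (5 * r) := by rw [zpow_mul]; norm_cast
  have e2 : (q ^ 2) ^ k = q ^ (2 * k) := by rw [zpow_mul]; norm_cast
  rw [thetaCoeff, thetaCoeff, hr2, e1, e2]
  have e3 : 5 * r + 2 * k = k ^ 2 + (k ^ 2 + r) := by linear_combination (-2) * hr
  have e4 : q ^ (5 * r) * q ^ (2 * k) = q ^ (k ^ 2) * (q ^ (k ^ 2) * q ^ r) := by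
    rw [← zpow_add₀ hq0, ← zpow_add₀ hq0, ← zpow_add₀ hq0, e3]
  linear_combination ((-1) ^ k) * e4

lemma summable_theta (hq : ‖q‖ < 1) (hq0 : q ≠ 0) :
    Summable fun k : ℤ => ‖q ^ (k ^ 2) * (q ^ (k ^ 2) * thetaCoeff q k)‖ := by
  have hbound : ∀ k : ℤ, ‖q ^ (k ^ 2) * (q ^ (k ^ 2) * thetaCoeff q k)‖ ≤ ‖q‖ ^ k.natAbs := by
    intro k
    obtain ⟨r, hr⟩ : Even (k * (k - 1)) := Int.even_mul_pred_self k
    have hr2 : k * (k - 1) / 2 = r := by omega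
    rw [thetaCoeff, hr2, norm_mul, norm_mul, norm_mul, norm_zpow, norm_zpow, norm_zpow, norm_neg,
      norm_one, one_zpow, one_mul]
    have hn : 0 < ‖q‖ := norm_pos_iff.mpr hq0
    rw [← zpow_add₀ hn.ne', ← zpow_add₀ hn.ne', ← zpow_natCast]
    apply zpow_le_zpow_right_of_le_one₀ hn hq.le
    have hk : (k.natAbs : ℤ) ≤ k ^ 2 := by
      rw [← Int.natAbs_sq]
      exact_mod_cast Nat.le_self_pow (by norm_num) _
    have h1 : 0 ≤ k * (k - 1) := by
      rcases le_or_gt k 0 with h | h <;> nlinarith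
    nlinarith
  refine Summable.of_nonneg_of_le (fun _ => norm_nonneg _) hbound ?_
  have hg := summable_geometric_of_lt_one (norm_nonneg q) hq
  apply Summable.of_nat_of_neg <;> simpa using hg

lemma norm_pow_five_lt (hq : ‖q‖ < 1) : ‖q ^ 5‖ < 1 := by
  rw [norm_pow]
  exact pow_lt_one₀ (norm_nonneg _) hq (by norm_num)

/-- Jacobi's triple product with base `q^5` and `z = q^2`. -/
lemma theta_eq_prod (hq : ‖q‖ < 1) (hq0 : q ≠ 0) :
    ∑' k : ℤ, q ^ (k ^ 2) * (q ^ (k ^ 2) * thetaCoeff q k) =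
      (∏' k : ℕ, (1 - q ^ (5 * k + 2))) * (∏' k : ℕ, (1 - q ^ (5 * k + 3))) *
        ∏' k : ℕ, (1 - q ^ (5 * k + 5)) := by
  have hq5 := norm_pow_five_lt hq
  have hq50 : q ^ 5 ≠ 0 := pow_ne_zero 5 hq0
  have hP : ∏' k : ℕ, (1 - (q ^ 5) ^ (k + 1)) = ∏' k : ℕ, (1 - q ^ (5 * k + 5)) :=
    tprod_congr fun k => by rw [← pow_mul, mul_add, mul_one]
  have h1 := tendsto_bailey hq5 (summable_theta hq hq0)
  rw [hP] at h1
  have h2 := ((tendsto_prod hq (by norm_num : 0 < 5) 2).mul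
    (tendsto_prod hq (by norm_num : 0 < 5) 3)).mul
    ((tendsto_qInv_natCast hq5).comp (tendsto_id.const_mul_atTop' (by norm_num : 0 < 2)))
  rw [hP] at h2
  have h3 := tendsto_nhds_unique h1 (h2.congr fun n => by
    simp_rw [← thetaCoeff_pow_five hq0]
    rw [finite_triple_product hq5 hq50 (pow_ne_zero 2 hq0)]
    simp only [Function.comp, id]
    congr 2
    · refine Finset.prod_congr rfl fun i _ => ?_
      rw [← pow_mul]; ring
    · refine Finset.prod_congr rfl fun i _ => ?_
      rw [← pow_mul, show 5 * (i + 1) = 5 * i + 3 + 2 by ring, pow_add q (5 * i + 3),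
        mul_div_cancel_right₀ _ (pow_ne_zero 2 hq0)])
  have hne : ∏' k : ℕ, (1 - q ^ (5 * k + 5)) ≠ 0 := tprod_one_sub_ne_zero hq (by norm_num) 4
  generalize ∑' k : ℤ, q ^ (k ^ 2) * (q ^ (k ^ 2) * thetaCoeff q k) = S at *
  field_simp at h3
  linear_combination h3

lemma tprod_split_five (hq : ‖q‖ < 1) :
    ∏' k : ℕ, (1 - q ^ (k + 1)) =
      (∏' k : ℕ, (1 - q ^ (5 * k + 1))) * (∏' k : ℕ, (1 - q ^ (5 * k + 2))) *
      (∏' k : ℕ, (1 - q ^ (5 * k + 3))) * (∏' k : ℕ, (1 - q ^ (5 * k + 4))) *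
      (∏' k : ℕ, (1 - q ^ (5 * k + 5))) := by
  have h5 : 0 < 5 := by norm_num
  have h1 : Tendsto (fun n => ∏ k ∈ Finset.range n, (1 - q ^ (k + 1))) atTop
      (𝓝 (∏' k : ℕ, (1 - q ^ (k + 1)))) := by
    simpa using tendsto_prod hq one_pos 1
  have h2 := h1.comp (tendsto_id.const_mul_atTop' h5)
  have h3 := ((((tendsto_prod hq h5 1).mul (tendsto_prod hq h5 2)).mul
    (tendsto_prod hq h5 3)).mul (tendsto_prod hq h5 4)).mul (tendsto_prod hq h5 5)
  refine tendsto_nhds_unique h2 (h3.congr fun n => ?_)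
  simp only [Function.comp, id]
  induction n with
  | zero => simp
  | succ n ih =>
    rw [show 5 * (n + 1) = 5 * n + 1 + 1 + 1 + 1 + 1 by ring]
    simp only [Finset.prod_range_succ _ n, Finset.prod_range_succ _ (5 * n + 1 + 1 + 1 + 1),
      Finset.prod_range_succ _ (5 * n + 1 + 1 + 1), Finset.prod_range_succ _ (5 * n + 1 + 1),
      Finset.prod_range_succ _ (5 * n + 1), Finset.prod_range_succ _ (5 * n)]
    rw [← ih]
    ring

theorem main (hq : ‖q‖ < 1) (hq0 : q ≠ 0) :
    (∑' n : ℕ, q ^ (n ^ 2) / ∏ i ∈ Finset.range n, (1 - q ^ (i + 1))) =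
      1 / ∏' k : ℕ, ((1 - q ^ (5 * k + 1)) * (1 - q ^ (5 * k + 4))) := by
  have h5 : 0 < 5 := by norm_num
  have hlim := tendsto_nhds_unique (tendsto_convolution hq)
    ((tendsto_bailey hq (summable_theta hq hq0)).congr (finite_rogers_ramanujan hq hq0))
  have hG : (∑' n : ℕ, q ^ (n ^ 2) / ∏ i ∈ Finset.range n, (1 - q ^ (i + 1))) =
      ∑' j : ℕ, q ^ (j ^ 2) * qInv q j :=
    tsum_congr fun n => by rw [qInv_natCast, div_eq_mul_inv]
  rw [theta_eq_prod hq hq0, tprod_split_five hq] at hlim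
  rw [hG, (multipliable_one_sub hq h5 1).tprod_mul (multipliable_one_sub hq h5 4)]
  have n1 := tprod_one_sub_ne_zero hq h5 0
  have n2 := tprod_one_sub_ne_zero hq h5 1
  have n3 := tprod_one_sub_ne_zero hq h5 2
  have n4 := tprod_one_sub_ne_zero hq h5 3
  have n5 := tprod_one_sub_ne_zero hq h5 4
  norm_num only at n1 n2 n3 n4 n5
  generalize ∏' k : ℕ, (1 - q ^ (5 * k + 1)) = P1 at *
  generalize ∏' k : ℕ, (1 - q ^ (5 * k + 2)) = P2 at *
  generalize ∏' k : ℕ, (1 - q ^ (5 * k + 3)) = P3 at *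
  generalize ∏' k : ℕ, (1 - q ^ (5 * k + 4)) = P4 at *
  generalize ∏' k : ℕ, (1 - q ^ (5 * k + 5)) = P5 at *
  generalize ∑' j : ℕ, q ^ (j ^ 2) * qInv q j = S at *
  field_simp at hlim ⊢
  linear_combination hlim

end RogersRamanujan

theorem stmt0 (q : ℂ) (hq : ‖q‖ < 1) :
    (∑' n : ℕ, q ^ (n ^ 2) / ∏ i ∈ Finset.range n, (1 - q ^ (i + 1))) =
      1 / ∏' k : ℕ, ((1 - q ^ (5 * k + 1)) * (1 - q ^ (5 * k + 4))) := by
  rcases eq_or_ne q 0 with rfl | hq0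
  · rw [tsum_eq_single 0]
    · simp
    · intro n hn
      simp [hn]
  · exact RogersRamanujan.main hq hq0
end

section
/- For |q|<1, the Rogers–Ramanujan function H(q) = ∑_{n≥0} q^{n^2+n}/((1-q)(1-q^2)⋯(1-q^n)) equals the infinite product 1/∏_{k≥0}((1-q^{5k+2})(1-q^{5k+3})). -/
open Filter Topology

/-! ### Gaussian binomial coefficients with integer lower index -/

/-- The finite product `(q; q)_n = (1 - q)(1 - q²)⋯(1 - qⁿ)`. -/
noncomputable def qfac (q : ℂ) (n : ℕ) : ℂ := ∏ i ∈ Finset.range n, (1 - q ^ (i + 1))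

/-- `1 / (q; q)_k` for an integer `k`, with the usual convention that it vanishes for `k < 0`;
this makes `qinv_rec` hold for every integer. -/
noncomputable def qinv (q : ℂ) (k : ℤ) : ℂ := if 0 ≤ k then (qfac q k.toNat)⁻¹ else 0

/-- The Gaussian binomial coefficient `[N, k]_q`, for an integer `k`; it vanishes unless
`0 ≤ k ≤ N`. -/
noncomputable def qbin (q : ℂ) (N : ℕ) (k : ℤ) : ℂ := qfac q N * qinv q k * qinv q (N - k)

lemma one_sub_pow_ne {q : ℂ} (hq : ‖q‖ < 1) (n : ℕ) : 1 - q ^ (n + 1) ≠ 0 := by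
  intro h
  have h1 : ‖q ^ (n + 1)‖ = 1 := by rw [← sub_eq_zero.mp h, norm_one]
  rw [norm_pow] at h1
  exact absurd h1 (pow_lt_one₀ (norm_nonneg _) hq (by omega)).ne

lemma qfac_ne {q : ℂ} (hq : ‖q‖ < 1) (n : ℕ) : qfac q n ≠ 0 :=
  Finset.prod_ne_zero_iff.mpr fun i _ => one_sub_pow_ne hq i

lemma qfac_succ (q : ℂ) (n : ℕ) : qfac q (n + 1) = qfac q n * (1 - q ^ (n + 1)) :=
  Finset.prod_range_succ _ _

lemma qinv_natCast (q : ℂ) (n : ℕ) : qinv q n = (qfac q n)⁻¹ := by simp [qinv]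

lemma qinv_neg (q : ℂ) {k : ℤ} (hk : k < 0) : qinv q k = 0 := by simp [qinv, hk]

lemma qinv_rec {q : ℂ} (hq : ‖q‖ < 1) (k : ℤ) : (1 - q ^ k) * qinv q k = qinv q (k - 1) := by
  rcases lt_trichotomy k 0 with h | rfl | h
  · rw [qinv_neg q h, qinv_neg q (by omega), mul_zero]
  · rw [qinv_neg q (by omega : (0 : ℤ) - 1 < 0)]; simp
  · obtain ⟨n, rfl⟩ : ∃ n : ℕ, k = ((n + 1 : ℕ) : ℤ) := ⟨(k - 1).toNat, by omega⟩
    rw [show (((n + 1 : ℕ) : ℤ) - 1) = (n : ℤ) by push_cast; ring, qinv_natCast, qinv_natCast,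
      qfac_succ, zpow_natCast]
    have h1 := one_sub_pow_ne hq n
    have h2 := qfac_ne hq n
    field_simp

lemma qbin_pascal {q : ℂ} (h0 : q ≠ 0) (hq : ‖q‖ < 1) (N : ℕ) (k : ℤ) :
    qbin q (N + 1) k = qbin q N k + q ^ ((N : ℤ) + 1 - k) * qbin q N (k - 1) := by
  have h1 := qinv_rec hq k
  have h2 := qinv_rec hq ((N : ℤ) + 1 - k)
  have h3 : q ^ (N + 1) = q ^ ((N : ℤ) + 1 - k) * q ^ k := by
    rw [← zpow_add₀ h0, ← zpow_natCast]; congr 1; push_cast; ring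
  unfold qbin
  rw [qfac_succ, h3, ← h1, show (N : ℤ) - k = (N : ℤ) + 1 - k - 1 by ring, ← h2,
    show (N : ℤ) - (k - 1) = (N : ℤ) + 1 - k by ring]
  push_cast
  ring

lemma qbin_symm (q : ℂ) (N : ℕ) {k l : ℤ} (h : k + l = N) : qbin q N k = qbin q N l := by
  unfold qbin
  rw [show (N : ℤ) - k = l by omega, show (N : ℤ) - l = k by omega]
  ring

lemma qbin_pascal' {q : ℂ} (h0 : q ≠ 0) (hq : ‖q‖ < 1) (N : ℕ) (k : ℤ) :
    qbin q (N + 1) k = qbin q N (k - 1) + q ^ k * qbin q N k := by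
  rw [qbin_symm q (N + 1) (l := (N : ℤ) + 1 - k) (by push_cast; ring), qbin_pascal h0 hq,
    qbin_symm q N (k := (N : ℤ) + 1 - k) (l := k - 1) (by ring),
    qbin_symm q N (k := (N : ℤ) + 1 - k - 1) (l := k) (by ring)]
  congr 3; ring

lemma qbin_absorb {q : ℂ} (hq : ‖q‖ < 1) (N : ℕ) (k : ℤ) :
    (1 - q ^ ((N : ℤ) + 1 - k)) * qbin q (N + 1) k = (1 - q ^ (N + 1)) * qbin q N k := by
  have h2 := qinv_rec hq ((N : ℤ) + 1 - k)
  unfold qbin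
  rw [qfac_succ, show (N : ℤ) - k = (N : ℤ) + 1 - k - 1 by ring, ← h2]
  push_cast
  ring

lemma qbin_eq_zero (q : ℂ) (N : ℕ) {k : ℤ} (h : k < 0 ∨ (N : ℤ) < k) : qbin q N k = 0 := by
  unfold qbin
  rcases h with h | h
  · rw [qinv_neg q h]; ring
  · rw [qinv_neg q (by omega : (N : ℤ) - k < 0)]; ring

lemma qbin_zero_right {q : ℂ} (hq : ‖q‖ < 1) (N : ℕ) : qbin q N 0 = 1 := by
  have h := qinv_natCast q 0
  have h2 := qfac_ne hq N
  simp only [Nat.cast_zero] at h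
  simp [qbin, h, qinv_natCast, qfac]
  exact mul_inv_cancel₀ h2

lemma qbin_self {q : ℂ} (hq : ‖q‖ < 1) (N : ℕ) : qbin q N N = 1 := by
  rw [qbin_symm q N (l := 0) (by ring), qbin_zero_right hq]

lemma summable_qbin (q : ℂ) (N : ℕ) (u : ℤ → ℂ) {f : ℤ → ℤ} (hf : Function.Injective f) :
    Summable fun j => u j * qbin q N (f j) := by
  apply summable_of_hasFiniteSupport
  apply ((Set.finite_Icc (0 : ℤ) N).preimage hf.injOn).subset
  intro j hj
  by_contra h
  refine hj ?_
  simp only [Set.mem_preimage, Set.mem_Icc, not_and_or, not_le] at h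
  simp [qbin_eq_zero q N h]

lemma inj_add (a : ℤ) : Function.Injective fun j : ℤ => a + j := fun x y h => by
  simp only at h; omega

lemma inj_two (a : ℤ) : Function.Injective fun j : ℤ => a + 2 * j := fun x y h => by
  simp only at h; omega

lemma inj_id : Function.Injective fun j : ℤ => j := fun _ _ h => h

/-! ### The alternating weights -/

/-- The coefficient `(-1)^j q^{j(5j+c)/2}`, used for odd `c`, where the division is exact. -/
noncomputable def wt (q : ℂ) (c : ℤ) (j : ℤ) : ℂ := (-1) ^ j * q ^ (j * (5 * j + c) / 2)

lemma two_mul_exp {c : ℤ} (hc : Odd c) (j : ℤ) : 2 * (j * (5 * j + c) / 2) = j * (5 * j + c) := by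
  apply Int.mul_ediv_cancel'
  obtain ⟨d, rfl⟩ := hc
  rcases Int.even_or_odd' j with ⟨i, rfl | rfl⟩
  · exact ⟨i * (5 * (2 * i) + (2 * d + 1)), by ring⟩
  · exact ⟨(2 * i + 1) * (5 * i + d + 3), by ring⟩

lemma neg_one_zpow_neg (j : ℤ) : (-1 : ℂ) ^ (-j) = (-1) ^ j := by
  rcases Int.even_or_odd j with h | h
  · rw [h.neg_one_zpow, h.neg.neg_one_zpow]
  · rw [h.neg_one_zpow, h.neg.neg_one_zpow]

lemma wt_mul {q : ℂ} (h0 : q ≠ 0) (c j m : ℤ) :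
    wt q c j * q ^ m = (-1) ^ j * q ^ (j * (5 * j + c) / 2 + m) := by
  rw [wt, zpow_add₀ h0, mul_assoc]

lemma wt_neg {q : ℂ} (h0 : q ≠ 0) (j : ℤ) : wt q 1 (-j) * q ^ (2 * j) = wt q 3 j := by
  rw [wt_mul h0, wt, neg_one_zpow_neg]
  congr 2
  have h1 := two_mul_exp (c := 1) (by decide) (-j)
  have h2 := two_mul_exp (c := 3) (by decide) j
  linarith

lemma neg_one_zpow_refl (j : ℤ) : (-1 : ℂ) ^ (-1 - j) = -(-1) ^ j := by
  rw [sub_eq_add_neg, zpow_add₀ (by norm_num), neg_one_zpow_neg j]; norm_num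

lemma wt_one_refl {q : ℂ} (h0 : q ≠ 0) (j : ℤ) :
    wt q 1 (-1 - j) * q ^ (2 * (-1 - j)) = -(wt q 1 j * q ^ (2 * j)) := by
  rw [wt_mul h0, wt_mul h0, neg_one_zpow_refl, neg_mul]
  congr 3
  have h1 := two_mul_exp (c := 1) (by decide) (-1 - j)
  have h2 := two_mul_exp (c := 1) (by decide) j
  linarith

lemma wt_three_refl {q : ℂ} (h0 : q ≠ 0) (j : ℤ) :
    wt q 3 (-1 - j) = -(wt q 3 j * q ^ (2 * j + 1)) := by
  rw [wt_mul h0, wt, neg_one_zpow_refl, neg_mul]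
  congr 3
  have h1 := two_mul_exp (c := 3) (by decide) (-1 - j)
  have h2 := two_mul_exp (c := 3) (by decide) j
  linarith

lemma wt_three_succ {q : ℂ} (h0 : q ≠ 0) (j : ℤ) :
    wt q 3 (j + 1) = -(wt q 3 j * q ^ (5 * j + 4)) := by
  rw [wt_mul h0, wt, zpow_add_one₀ (by norm_num), mul_neg_one, neg_mul]
  congr 3
  have h1 := two_mul_exp (c := 3) (by decide) (j + 1)
  have h2 := two_mul_exp (c := 3) (by decide) j
  linarith

/-! ### The finite Rogers–Ramanujan identities -/

/-- `∑ₘ q^{m²} [n, m]`. -/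
noncomputable def sumF (q : ℂ) (n : ℕ) : ℂ := ∑' m : ℤ, q ^ (m ^ 2) * qbin q n m

/-- `∑ₘ q^{m²+m} [n, m]`. -/
noncomputable def sumG (q : ℂ) (n : ℕ) : ℂ := ∑' m : ℤ, q ^ (m ^ 2 + m) * qbin q n m

/-- `∑ⱼ (-1)^j q^{j(5j+1)/2} [2n, n+2j]`. -/
noncomputable def sumA (q : ℂ) (n : ℕ) : ℂ := ∑' j : ℤ, wt q 1 j * qbin q (2 * n) (n + 2 * j)

/-- `∑ⱼ (-1)^j q^{j(5j+3)/2} [2n+1, n+1+2j]`. -/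
noncomputable def sumB (q : ℂ) (n : ℕ) : ℂ :=
  ∑' j : ℤ, wt q 3 j * qbin q (2 * n + 1) (n + 1 + 2 * j)

/-- Split a sum in two and evaluate the second half after a permutation of the index. -/
lemma tsum_split {f g h h' : ℤ → ℂ} {c : ℂ} (σ : ℤ ≃ ℤ) (hg : Summable g) (hh : Summable h)
    (hf : ∀ j, f j = g j + h j) (hσ : ∀ j, h (σ j) = c * h' j) :
    ∑' j, f j = ∑' j, g j + c * ∑' j, h' j := by
  rw [tsum_congr hf, hg.tsum_add hh, ← σ.tsum_eq h, tsum_congr hσ, tsum_mul_left]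

lemma sumF_succ {q : ℂ} (h0 : q ≠ 0) (hq : ‖q‖ < 1) (n : ℕ) :
    sumF q (n + 1) = sumF q n + q ^ (n + 1) * sumG q n := by
  refine tsum_split (h := fun m => q ^ (m ^ 2) * q ^ ((n : ℤ) + 1 - m) * qbin q n (-1 + m))
    (Equiv.addRight 1) (summable_qbin q n _ inj_id) (summable_qbin q n _ (inj_add _)) ?_ ?_
  · intro m
    rw [qbin_pascal h0 hq, show m - 1 = -1 + m by ring]
    ring
  · intro m
    simp only [Equiv.coe_addRight]
    rw [show -1 + (m + 1) = m by ring, ← mul_assoc, ← zpow_add₀ h0, ← zpow_natCast q (n + 1),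
      ← zpow_add₀ h0]
    congr 2; push_cast; ring

lemma sumG_succ {q : ℂ} (h0 : q ≠ 0) (hq : ‖q‖ < 1) (n : ℕ) :
    sumG q (n + 1) = q ^ (n + 1) * sumF q (n + 1) + (1 - q ^ (n + 1)) * sumG q n := by
  have h := tsum_split (c := 1 - q ^ (n + 1)) (f := fun m => q ^ (m ^ 2 + m) * qbin q (n + 1) m)
    (g := fun m => q ^ (n + 1) * q ^ (m ^ 2) * qbin q (n + 1) m)
    (h := fun m => (1 - q ^ (n + 1)) * q ^ (m ^ 2 + m) * qbin q n m)
    (h' := fun m => q ^ (m ^ 2 + m) * qbin q n m) (Equiv.refl _)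
    (summable_qbin q _ _ inj_id) (summable_qbin q _ _ inj_id) ?_ (fun m => by simp; ring)
  · rw [sumG, h, sumF, sumG, ← tsum_mul_left (a := q ^ (n + 1))]
    simp only [mul_assoc]
  · intro m
    have h1 := qbin_absorb hq n m
    have h2 : q ^ (n + 1) * q ^ (m ^ 2) = q ^ (m ^ 2 + m) * q ^ ((n : ℤ) + 1 - m) := by
      rw [← zpow_natCast q (n + 1), ← zpow_add₀ h0, ← zpow_add₀ h0]
      congr 1; push_cast; ring
    rw [h2]
    linear_combination q ^ (m ^ 2 + m) * h1

lemma sumA_succ {q : ℂ} (h0 : q ≠ 0) (hq : ‖q‖ < 1) (n : ℕ) :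
    sumA q (n + 1) = sumA q n + q ^ (n + 1) * sumB q n := by
  have hX : ∑' j : ℤ, wt q 1 j * q ^ ((n : ℤ) + 1 + 2 * j) * qbin q (2 * n) (n + 1 + 2 * j) = 0 := by
    -- the summand is odd under the reflection `j ↦ -1 - j`
    apply CharZero.eq_neg_self_iff.mp
    conv_lhs => rw [← (Equiv.subLeft (-1 : ℤ)).tsum_eq]
    rw [← tsum_neg]
    refine tsum_congr fun j => ?_
    simp only [Equiv.subLeft_apply]
    rw [qbin_symm q (2 * n) (k := n + 1 + 2 * (-1 - j)) (l := n + 1 + 2 * j) (by push_cast; ring),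
      zpow_add₀ h0 _ (2 * (-1 - j)), zpow_add₀ h0 _ (2 * j)]
    linear_combination (q ^ ((n : ℤ) + 1) * qbin q (2 * n) (n + 1 + 2 * j)) * wt_one_refl h0 j
  have h1 : ∑' j : ℤ, wt q 1 j * qbin q (2 * n + 1) (n + 1 + 2 * j) = sumA q n := by
    have h := tsum_split (c := 1)
      (f := fun j => wt q 1 j * qbin q (2 * n + 1) (n + 1 + 2 * j))
      (g := fun j => wt q 1 j * qbin q (2 * n) (n + 2 * j))
      (h := fun j => wt q 1 j * q ^ ((n : ℤ) + 1 + 2 * j) * qbin q (2 * n) (n + 1 + 2 * j))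
      (Equiv.refl _) (summable_qbin q _ _ (inj_two _)) (summable_qbin q _ _ (inj_two _))
      (fun j => by
        rw [qbin_pascal' h0 hq, show (n : ℤ) + 1 + 2 * j - 1 = n + 2 * j by ring]
        ring) (fun j => (one_mul _).symm)
    rw [h]
    simp only [Equiv.refl_apply, hX]
    simp [sumA]
  rw [← h1]
  refine tsum_split
    (h := fun j => wt q 1 j * q ^ ((n : ℤ) + 1 - 2 * j) * qbin q (2 * n + 1) (n + 2 * j))
    (Equiv.neg ℤ) (summable_qbin q _ _ (inj_two _)) (summable_qbin q _ _ (inj_two _)) ?_ ?_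
  · intro j
    rw [show 2 * (n + 1) = 2 * n + 1 + 1 by ring, qbin_pascal h0 hq]
    push_cast
    rw [show (n : ℤ) + 1 + 2 * j - 1 = n + 2 * j by ring,
      show 2 * (n : ℤ) + 1 + 1 - (n + 1 + 2 * j) = n + 1 - 2 * j by ring]
    ring
  · intro j
    simp only [Equiv.neg_apply]
    rw [qbin_symm q (2 * n + 1) (k := n + 2 * (-j)) (l := n + 1 + 2 * j) (by push_cast; ring),
      ← wt_neg h0, show (n : ℤ) + 1 - 2 * (-j) = ((n + 1 : ℕ) : ℤ) + 2 * j by push_cast; ring,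
      zpow_add₀ h0, zpow_natCast]
    ring

lemma sumB_succ {q : ℂ} (h0 : q ≠ 0) (hq : ‖q‖ < 1) (n : ℕ) :
    sumB q (n + 1) = q ^ (n + 1) * sumA q (n + 1) + (1 - q ^ (n + 1)) * sumB q n := by
  have h1 : ∑' j : ℤ, wt q 3 j * qbin q (2 * n + 2) (n + 2 + 2 * j) =
      sumB q n + (-q ^ (n + 1)) * sumB q n := by
    refine tsum_split
      (h := fun j => wt q 3 j * q ^ ((n : ℤ) + 2 + 2 * j) * qbin q (2 * n + 1) (n + 2 + 2 * j))
      (Equiv.subLeft (-1)) (summable_qbin q _ _ (inj_two _)) (summable_qbin q _ _ (inj_two _)) ?_ ?_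
    · intro j
      rw [qbin_pascal' h0 hq, show (n : ℤ) + 2 + 2 * j - 1 = n + 1 + 2 * j by ring]
      ring
    · intro j
      simp only [Equiv.subLeft_apply]
      rw [qbin_symm q (2 * n + 1) (k := n + 2 + 2 * (-1 - j)) (l := n + 1 + 2 * j)
        (by push_cast; ring), wt_three_refl h0]
      have : q ^ (2 * j + 1) * q ^ ((n : ℤ) + 2 + 2 * (-1 - j)) = q ^ (n + 1) := by
        rw [← zpow_add₀ h0, ← zpow_natCast]; congr 1; push_cast; ring
      linear_combination (-wt q 3 j * qbin q (2 * n + 1) (n + 1 + 2 * j)) * this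
  have h2 : sumB q (n + 1) = ∑' j : ℤ, wt q 3 j * qbin q (2 * n + 2) (n + 2 + 2 * j) +
      q ^ (n + 1) * sumA q (n + 1) := by
    refine tsum_split
      (h := fun j => wt q 3 j * q ^ ((n : ℤ) + 1 - 2 * j) * qbin q (2 * n + 2) (n + 1 + 2 * j))
      (Equiv.neg ℤ) (summable_qbin q _ _ (inj_two _)) (summable_qbin q _ _ (inj_two _)) ?_ ?_
    · intro j
      rw [show 2 * (n + 1) + 1 = 2 * n + 2 + 1 by ring, qbin_pascal h0 hq]
      push_cast
      rw [show (n : ℤ) + 1 + 1 + 2 * j = n + 2 + 2 * j by ring,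
        show (n : ℤ) + 2 + 2 * j - 1 = n + 1 + 2 * j by ring,
        show 2 * (n : ℤ) + 2 + 1 - (n + 2 + 2 * j) = n + 1 - 2 * j by ring]
      ring
    · intro j
      simp only [Equiv.neg_apply]
      rw [show 2 * (n + 1) = 2 * n + 2 by ring,
        qbin_symm q (2 * n + 2) (k := n + 1 + 2 * (-j)) (l := n + 1 + 2 * j) (by push_cast; ring),
        ← wt_neg h0 (-j), neg_neg]
      have : q ^ (2 * -j) * q ^ ((n : ℤ) + 1 - 2 * -j) = q ^ (n + 1) := by
        rw [← zpow_add₀ h0, ← zpow_natCast]; congr 1; push_cast; ring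
      push_cast
      linear_combination (wt q 1 j * qbin q (2 * n + 2) (n + 1 + 2 * j)) * this
  rw [h2, h1]; ring

/-- The finite Rogers–Ramanujan identities: both pairs of sums solve the same first-order
recursion with the same initial values. -/
lemma finite_RR {q : ℂ} (h0 : q ≠ 0) (hq : ‖q‖ < 1) (n : ℕ) :
    sumF q n = sumA q n ∧ sumG q n = sumB q n := by
  induction n with
  | zero =>
    have hF : sumF q 0 = 1 := by
      rw [sumF, tsum_eq_single 0, qbin_zero_right hq]
      · simp
      · intro j hj; rw [qbin_eq_zero q 0 (by push_cast; omega), mul_zero]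
    have hG : sumG q 0 = 1 := by
      rw [sumG, tsum_eq_single 0, qbin_zero_right hq]
      · simp
      · intro j hj; rw [qbin_eq_zero q 0 (by push_cast; omega), mul_zero]
    have hA : sumA q 0 = 1 := by
      rw [sumA, tsum_eq_single 0]
      · have := qbin_zero_right hq 0
        simpa [wt] using this
      · intro j hj; rw [qbin_eq_zero q _ (by push_cast; omega), mul_zero]
    have hB : sumB q 0 = 1 := by
      rw [sumB, tsum_eq_single 0]
      · have := qbin_self hq 1
        simpa [wt] using this
      · intro j hj; rw [qbin_eq_zero q _ (by push_cast; omega), mul_zero]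
    rw [hF, hG, hA, hB]; exact ⟨rfl, rfl⟩
  | succ n ih =>
    have hF : sumF q (n + 1) = sumA q (n + 1) := by
      rw [sumF_succ h0 hq, sumA_succ h0 hq, ih.1, ih.2]
    exact ⟨hF, by rw [sumG_succ h0 hq, sumB_succ h0 hq, hF, ih.2]⟩

/-! ### A finite Jacobi triple product -/

/-- The finite Jacobi triple product in base `q⁵` at `z = q⁴`. -/
lemma finite_JTP {q : ℂ} (h0 : q ≠ 0) (hq : ‖q‖ < 1) (n : ℕ) :
    ∑' j : ℤ, wt q 3 j * qbin (q ^ 5) (2 * n) (n + j) =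
      ∏ k ∈ Finset.range n, ((1 - q ^ (5 * k + 1)) * (1 - q ^ (5 * k + 4))) := by
  have h05 : q ^ 5 ≠ 0 := pow_ne_zero 5 h0
  have hq5 : ‖q ^ 5‖ < 1 := by
    rw [norm_pow]; exact pow_lt_one₀ (norm_nonneg _) hq (by norm_num)
  have hz : ∀ m : ℤ, (q ^ 5) ^ m = q ^ (5 * m) := fun m => by
    rw [zpow_mul]; norm_cast
  induction n with
  | zero =>
    rw [tsum_eq_single 0]
    · have := qbin_zero_right hq5 0
      simpa [wt] using this
    · intro j hj; rw [qbin_eq_zero _ _ (by push_cast; omega), mul_zero]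
  | succ n ih =>
    have h1 : ∑' j : ℤ, wt q 3 j * qbin (q ^ 5) (2 * n + 1) (n + 1 + j) =
        ∑' j : ℤ, wt q 3 j * qbin (q ^ 5) (2 * n) (n + j) + (-q ^ (5 * n + 1)) *
        ∑' j : ℤ, wt q 3 j * qbin (q ^ 5) (2 * n) (n + j) := by
      refine tsum_split
        (h := fun j => wt q 3 j * q ^ (5 * ((n : ℤ) + 1 + j)) * qbin (q ^ 5) (2 * n) (n + 1 + j))
        (Equiv.subRight 1) (summable_qbin _ _ _ (inj_add _)) (summable_qbin _ _ _ (inj_add _)) ?_ ?_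
      · intro j
        rw [qbin_pascal' h05 hq5, show (n : ℤ) + 1 + j - 1 = n + j by ring, hz]
        ring
      · intro j
        simp only [Equiv.subRight_apply]
        have h2 := wt_three_succ h0 (j - 1)
        rw [sub_add_cancel] at h2
        rw [h2, show (n : ℤ) + 1 + (j - 1) = n + j by ring]
        have : q ^ (5 * ((n : ℤ) + j)) = q ^ (5 * n + 1) * q ^ (5 * (j - 1) + 4) := by
          rw [← zpow_natCast, ← zpow_add₀ h0]; congr 1; push_cast; ring
        rw [this]; ring
    have h2 : ∑' j : ℤ, wt q 3 j * qbin (q ^ 5) (2 * (n + 1)) ((n + 1 : ℕ) + j) =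
        ∑' j : ℤ, wt q 3 j * qbin (q ^ 5) (2 * n + 1) (n + 1 + j) + (-q ^ (5 * n + 4)) *
        ∑' j : ℤ, wt q 3 j * qbin (q ^ 5) (2 * n + 1) (n + 1 + j) := by
      refine tsum_split
        (h := fun j => wt q 3 j * q ^ (5 * ((n : ℤ) + 1 - j)) * qbin (q ^ 5) (2 * n + 1) (n + j))
        (Equiv.addRight 1) (summable_qbin _ _ _ (inj_add _)) (summable_qbin _ _ _ (inj_add _)) ?_ ?_
      · intro j
        rw [show 2 * (n + 1) = 2 * n + 1 + 1 by ring, qbin_pascal h05 hq5, hz]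
        push_cast
        rw [show (n : ℤ) + 1 + j - 1 = n + j by ring,
          show 2 * (n : ℤ) + 1 + 1 - (n + 1 + j) = n + 1 - j by ring]
        ring
      · intro j
        simp only [Equiv.coe_addRight]
        rw [wt_three_succ h0, show (n : ℤ) + (j + 1) = n + 1 + j by ring]
        have : q ^ (5 * j + 4) * q ^ (5 * ((n : ℤ) + 1 - (j + 1))) = q ^ (5 * n + 4) := by
          rw [← zpow_natCast, ← zpow_add₀ h0]; congr 1; push_cast; ring
        linear_combination (-wt q 3 j * qbin (q ^ 5) (2 * n + 1) (n + 1 + j)) * this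
    rw [h2, h1, ih, Finset.prod_range_succ]
    ring

/-! ### Passage to the limit -/

lemma summable_pow_affine {q : ℂ} (hq : ‖q‖ < 1) {a : ℕ} (ha : 0 < a) (b : ℕ) :
    Summable fun k : ℕ => ‖-q ^ (a * k + b)‖ := by
  have h : ‖q‖ ^ a < 1 := pow_lt_one₀ (norm_nonneg _) hq ha.ne'
  refine ((summable_geometric_of_lt_one (by positivity) h).mul_left (‖q‖ ^ b)).congr fun k => ?_
  rw [norm_neg, norm_pow, pow_add, pow_mul, mul_comm]

lemma multipliable_affine {q : ℂ} (hq : ‖q‖ < 1) {a : ℕ} (ha : 0 < a) (b : ℕ) :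
    Multipliable fun k : ℕ => 1 - q ^ (a * k + b) := by
  simpa [sub_eq_add_neg] using
    multipliable_one_add_of_summable (f := fun k : ℕ => -q ^ (a * k + b)) (summable_pow_affine hq ha b)

/-- The Euler product `(q; q)_∞`. -/
noncomputable def euler (q : ℂ) : ℂ := ∏' k : ℕ, (1 - q ^ (k + 1))

lemma euler_ne {q : ℂ} (hq : ‖q‖ < 1) : euler q ≠ 0 := by
  have := tprod_one_add_ne_zero_of_summable (f := fun k : ℕ => -q ^ (k + 1))
    (fun k => by simpa [← sub_eq_add_neg] using one_sub_pow_ne hq k)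
    (by simpa using summable_pow_affine hq one_pos 1)
  simpa [euler, sub_eq_add_neg] using this

lemma tendsto_qfac {q : ℂ} (hq : ‖q‖ < 1) : Tendsto (qfac q) atTop (𝓝 (euler q)) := by
  have := (multipliable_affine hq one_pos 1).tendsto_prod_tprod_nat
  simp only [one_mul] at this
  exact this

lemma tendsto_toNat : Tendsto Int.toNat atTop atTop :=
  tendsto_atTop.mpr fun b => by
    filter_upwards [eventually_ge_atTop (b : ℤ)] with k hk
    omega

lemma tendsto_qinv {q : ℂ} (hq : ‖q‖ < 1) : Tendsto (qinv q) atTop (𝓝 (euler q)⁻¹) := by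
  have h := ((tendsto_qfac hq).inv₀ (euler_ne hq)).comp tendsto_toNat
  refine h.congr' ?_
  filter_upwards [eventually_ge_atTop 0] with k hk
  simp [qinv, hk]

lemma exists_bound_qbin {q : ℂ} (hq : ‖q‖ < 1) : ∃ M : ℝ, ∀ N k, ‖qbin q N k‖ ≤ M := by
  obtain ⟨C, hC⟩ := (Metric.isBounded_range_of_tendsto _ (tendsto_qfac hq)).exists_norm_le
  obtain ⟨D, hD⟩ := (Metric.isBounded_range_of_tendsto _
    ((tendsto_qfac hq).inv₀ (euler_ne hq))).exists_norm_le
  have hC' : ∀ n, ‖qfac q n‖ ≤ C := fun n => hC _ ⟨n, rfl⟩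
  have hD0 : 0 ≤ D := (norm_nonneg _).trans (hD _ ⟨0, rfl⟩)
  have hC0 : 0 ≤ C := (norm_nonneg _).trans (hC' 0)
  have hE : ∀ k, ‖qinv q k‖ ≤ D := fun k => by
    unfold qinv
    split_ifs
    · exact hD _ ⟨k.toNat, rfl⟩
    · simpa using hD0
  refine ⟨C * D * D, fun N k => ?_⟩
  rw [qbin, norm_mul, norm_mul]
  gcongr
  exacts [hC' N, hE _, hE _]

/-- Tannery's theorem for sums of uniformly bounded Gaussian binomials. -/
lemma tendsto_tsum_qbin {q : ℂ} (hq : ‖q‖ < 1) {u : ℤ → ℂ} (hu : Summable fun j => ‖u j‖)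
    {N : ℕ → ℕ} {k : ℕ → ℤ → ℤ} {L : ℤ → ℂ}
    (h : ∀ j, Tendsto (fun n => qbin q (N n) (k n j)) atTop (𝓝 (L j))) :
    Tendsto (fun n => ∑' j, u j * qbin q (N n) (k n j)) atTop (𝓝 (∑' j, u j * L j)) := by
  obtain ⟨M, hM⟩ := exists_bound_qbin hq
  refine tendsto_tsum_of_dominated_convergence (hu.mul_right M) (fun j => (h j).const_mul _) ?_
  filter_upwards with n j
  rw [norm_mul]
  exact mul_le_mul_of_nonneg_left (hM _ _) (norm_nonneg _)

lemma tendsto_qbin_middle {q : ℂ} (hq : ‖q‖ < 1) {N : ℕ → ℕ} {k : ℕ → ℤ}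
    (hN : Tendsto N atTop atTop) (hk : Tendsto k atTop atTop)
    (hk' : Tendsto (fun n => (N n : ℤ) - k n) atTop atTop) :
    Tendsto (fun n => qbin q (N n) (k n)) atTop (𝓝 (euler q)⁻¹) := by
  have := (((tendsto_qfac hq).comp hN).mul ((tendsto_qinv hq).comp hk)).mul
    ((tendsto_qinv hq).comp hk')
  rwa [mul_inv_cancel₀ (euler_ne hq), one_mul] at this

lemma tendsto_qbin_left {q : ℂ} (hq : ‖q‖ < 1) (k : ℤ) :
    Tendsto (fun n : ℕ => qbin q n k) atTop (𝓝 (qinv q k)) := by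
  have hk' : Tendsto (fun n : ℕ => (n : ℤ) - k) atTop atTop :=
    tendsto_atTop_add_const_right _ (-k) tendsto_natCast_atTop_atTop
  have := ((tendsto_qfac hq).mul_const (qinv q k)).mul ((tendsto_qinv hq).comp hk')
  rwa [mul_right_comm, mul_inv_cancel₀ (euler_ne hq), one_mul] at this

lemma summable_zpow {q : ℂ} (h0 : q ≠ 0) (hq : ‖q‖ < 1) {t : ℤ → ℤ} (ht : ∀ j, |j| - 1 ≤ t j) :
    Summable fun j => ‖q ^ t j‖ := by
  have hr : 0 < ‖q‖ := norm_pos_iff.mpr h0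
  have hs : Summable fun j : ℤ => ‖q‖ ^ (|j| - 1) := by
    have hg := (summable_geometric_of_lt_one hr.le hq).mul_right (‖q‖ ^ (-1 : ℤ))
    refine Summable.of_nat_of_neg ?_ ?_ <;>
    · refine hg.congr fun n => ?_
      rw [sub_eq_add_neg, zpow_add₀ hr.ne']
      simp
  refine hs.of_nonneg_of_le (fun _ => norm_nonneg _) fun j => ?_
  rw [norm_zpow]
  exact zpow_le_zpow_right_of_le_one₀ hr hq.le (ht j)

lemma summable_wt {q : ℂ} (h0 : q ≠ 0) (hq : ‖q‖ < 1) : Summable fun j => ‖wt q 3 j‖ := by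
  have h := summable_zpow h0 hq (t := fun j => j * (5 * j + 3) / 2) fun j => by
    have h1 := two_mul_exp (c := 3) (by decide) j
    rcases abs_cases j with ⟨h, _⟩ | ⟨h, _⟩ <;> rw [h] <;> nlinarith
  refine h.congr fun j => ?_
  simp [wt]

/-- The limit of the finite Rogers–Ramanujan identity. -/
lemma tsum_eq_theta {q : ℂ} (h0 : q ≠ 0) (hq : ‖q‖ < 1) :
    ∑' n : ℕ, q ^ (n ^ 2 + n) / qfac q n = (∑' j, wt q 3 j) * (euler q)⁻¹ := by
  have hu := summable_zpow h0 hq (t := fun j => j ^ 2 + j) fun j => by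
    rcases abs_cases j with ⟨h, _⟩ | ⟨h, _⟩ <;> rw [h] <;> nlinarith [sq_nonneg (j + 1)]
  have hG : Tendsto (sumG q) atTop (𝓝 (∑' m : ℤ, q ^ (m ^ 2 + m) * qinv q m)) :=
    tendsto_tsum_qbin hq hu (N := fun n => n) (k := fun _ j => j) fun j => tendsto_qbin_left hq j
  have hB : Tendsto (sumB q) atTop (𝓝 (∑' j : ℤ, wt q 3 j * (euler q)⁻¹)) := by
    refine tendsto_tsum_qbin hq (summable_wt h0 hq) (N := fun n => 2 * n + 1)
      (k := fun n j => n + 1 + 2 * j) fun j => tendsto_qbin_middle hq ?_ ?_ ?_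
    · exact tendsto_atTop_mono (fun n => by simp only [id]; omega) tendsto_id
    · exact tendsto_atTop_mono (fun n => by omega)
        (tendsto_atTop_add_const_right _ (1 + 2 * j) tendsto_natCast_atTop_atTop)
    · exact tendsto_atTop_mono (fun n => by push_cast; omega)
        (tendsto_atTop_add_const_right _ (-2 * j) tendsto_natCast_atTop_atTop)
  have h := tendsto_nhds_unique hG (hB.congr fun n => ((finite_RR h0 hq n).2).symm)
  rw [← tsum_mul_right, ← h, ← Nat.cast_injective.tsum_eq (f := fun m : ℤ => _ * qinv q m)]
  · refine tsum_congr fun n => ?_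
    rw [qinv_natCast, div_eq_mul_inv]
    norm_cast
  · intro m hm
    by_contra hneg
    refine hm ?_
    have : m < 0 := by
      by_contra h'
      exact hneg ⟨m.toNat, by omega⟩
    simp [qinv_neg q this]

/-- The limit of the finite triple product. -/
lemma theta_eq_prod {q : ℂ} (h0 : q ≠ 0) (hq : ‖q‖ < 1) :
    (∑' j, wt q 3 j) * (euler (q ^ 5))⁻¹ =
      ∏' k : ℕ, ((1 - q ^ (5 * k + 1)) * (1 - q ^ (5 * k + 4))) := by
  have hq5 : ‖q ^ 5‖ < 1 := by
    rw [norm_pow]; exact pow_lt_one₀ (norm_nonneg _) hq (by norm_num)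
  have h1 := ((multipliable_affine hq (a := 5) (by norm_num) 1).mul
    (multipliable_affine hq (a := 5) (by norm_num) 4)).tendsto_prod_tprod_nat
  have h2 : Tendsto (fun n : ℕ => ∑' j : ℤ, wt q 3 j * qbin (q ^ 5) (2 * n) (n + j)) atTop
      (𝓝 (∑' j : ℤ, wt q 3 j * (euler (q ^ 5))⁻¹)) := by
    refine tendsto_tsum_qbin hq5 (summable_wt h0 hq) (N := fun n => 2 * n)
      (k := fun n j => n + j) fun j => tendsto_qbin_middle hq5 ?_ ?_ ?_
    · exact tendsto_atTop_mono (fun n => by simp only [id]; omega) tendsto_id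
    · exact tendsto_atTop_add_const_right _ j tendsto_natCast_atTop_atTop
    · exact tendsto_atTop_mono (fun n => by push_cast; omega)
        (tendsto_atTop_add_const_right _ (-j) tendsto_natCast_atTop_atTop)
  rw [← tsum_mul_right]
  exact tendsto_nhds_unique h2 (h1.congr fun n => (finite_JTP h0 hq n).symm)

/-- Splitting `(q; q)_∞` by residues modulo `5`. -/
lemma euler_split {q : ℂ} (hq : ‖q‖ < 1) :
    euler q = (∏' k : ℕ, ((1 - q ^ (5 * k + 1)) * (1 - q ^ (5 * k + 4)))) *
      (∏' k : ℕ, ((1 - q ^ (5 * k + 2)) * (1 - q ^ (5 * k + 3)))) * euler (q ^ 5) := by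
  have hq5 : ‖q ^ 5‖ < 1 := by
    rw [norm_pow]; exact pow_lt_one₀ (norm_nonneg _) hq (by norm_num)
  have hm := fun b => multipliable_affine hq (a := 5) (by norm_num) b
  have h := (((hm 1).mul (hm 4)).tendsto_prod_tprod_nat.mul
    ((hm 2).mul (hm 3)).tendsto_prod_tprod_nat).mul (tendsto_qfac hq5)
  have h5 : Tendsto (fun n : ℕ => qfac q (5 * n)) atTop (𝓝 (euler q)) :=
    (tendsto_qfac hq).comp (tendsto_atTop_mono (fun n => by simp only [id]; omega) tendsto_id)
  refine tendsto_nhds_unique h5 (h.congr fun n => ?_)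
  induction n with
  | zero => simp [qfac]
  | succ n ih =>
    rw [show 5 * (n + 1) = 5 * n + 1 + 1 + 1 + 1 + 1 by ring]
    simp only [qfac_succ, Finset.prod_range_succ, ← ih]
    rw [← pow_mul]
    ring

theorem stmt1 (q : ℂ) (hq : ‖q‖ < 1) :
    (∑' n : ℕ, q ^ (n ^ 2 + n) / ∏ i ∈ Finset.range n, (1 - q ^ (i + 1))) =
      1 / ∏' k : ℕ, ((1 - q ^ (5 * k + 2)) * (1 - q ^ (5 * k + 3))) := by
  rcases eq_or_ne q 0 with rfl | h0
  · rw [tsum_eq_single 0]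
    · simp
    · intro n hn
      simp [hn]
  have h1 := tsum_eq_theta h0 hq
  have h2 := theta_eq_prod h0 hq
  have h3 := euler_split hq
  have hE := euler_ne hq
  have hE5 : euler (q ^ 5) ≠ 0 := euler_ne (by
    rw [norm_pow]; exact pow_lt_one₀ (norm_nonneg _) hq (by norm_num))
  unfold qfac at h1
  rw [h1]
  have h4 := (mul_inv_eq_iff_eq_mul₀ hE5).mp h2
  rw [h4]
  have h23 : ∏' k : ℕ, ((1 - q ^ (5 * k + 2)) * (1 - q ^ (5 * k + 3))) ≠ 0 := by
    intro h; rw [h] at h3; exact hE (by rw [h3]; ring)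
  rw [← div_eq_mul_inv, div_eq_div_iff hE h23, h3]
  ring
end

section
/- For |q|<1, G(q)^2·H(q^2) + G(q^2)·H(q)^2 = 2·G(q)·G(q^2)^2 / (q^5; q^{10})_∞^2. -/
/-! ### Infinite products -/

theorem qp_summable (a : ℂ) {p : ℂ} (hp : ‖p‖ < 1) : Summable fun k : ℕ => ‖-(a * p ^ k)‖ := by
  simp only [norm_neg, norm_mul, norm_pow]
  exact (summable_geometric_of_lt_one (norm_nonneg _) hp).mul_left _

theorem qp_multipliable (a : ℂ) {p : ℂ} (hp : ‖p‖ < 1) :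
    Multipliable fun k : ℕ => 1 - a * p ^ k := by
  simpa [sub_eq_add_neg] using multipliable_one_add_of_summable (qp_summable a hp)

theorem one_sub_ne_zero_of_norm {a p : ℂ} (ha : ‖a‖ < 1) (hp : ‖p‖ < 1) (k : ℕ) :
    1 - a * p ^ k ≠ 0 := by
  intro h
  have h1 : ‖a * p ^ k‖ = 1 := by rw [← sub_eq_zero.mp h]; simp
  rw [norm_mul, norm_pow] at h1
  have := pow_le_one₀ (n := k) (norm_nonneg p) hp.le
  nlinarith [norm_nonneg a]

theorem qp_ne_zero {a p : ℂ} (ha : ‖a‖ < 1) (hp : ‖p‖ < 1) : qp a p ≠ 0 := by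
  have := tprod_one_add_ne_zero_of_summable (f := fun k : ℕ => -(a * p ^ k))
    (fun k => by simpa [sub_eq_add_neg] using one_sub_ne_zero_of_norm ha hp k) (qp_summable a hp)
  simpa [qp, sub_eq_add_neg] using this

theorem qp_mul_neg (a : ℂ) {p : ℂ} (hp : ‖p‖ < 1) :
    qp a p * qp (-a) p = qp (a ^ 2) (p ^ 2) := by
  unfold qp
  rw [← (qp_multipliable a hp).tprod_mul (qp_multipliable (-a) hp)]
  congr 1; ext k; ring

theorem norm_sq_lt_one {p : ℂ} (hp : ‖p‖ < 1) : ‖p ^ 2‖ < 1 := by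
  rw [norm_pow]; exact pow_lt_one₀ (norm_nonneg _) hp two_ne_zero

theorem qp_even_odd (a : ℂ) {p : ℂ} (hp : ‖p‖ < 1) :
    qp a p = qp a (p ^ 2) * qp (a * p) (p ^ 2) := by
  have h2 := norm_sq_lt_one hp
  unfold qp
  rw [← tprod_even_mul_odd (f := fun k : ℕ => 1 - a * p ^ k)]
  · congr 1
    · simp only [pow_mul]
    · congr 1; ext k; ring
  · simpa only [pow_mul] using qp_multipliable a h2
  · convert qp_multipliable (a * p) h2 using 3; ring

theorem tendsto_qp (a : ℂ) {p : ℂ} (hp : ‖p‖ < 1) :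
    Filter.Tendsto (fun n => ∏ k ∈ Finset.range n, (1 - a * p ^ k)) Filter.atTop
      (nhds (qp a p)) := (qp_multipliable a hp).hasProd.tendsto_prod_nat

/-! ### The finite triple product -/

/-- The general term `p^(j(j-1)/2) x^j` of the Jacobi theta series; the exponent is an exact
integer division. -/
noncomputable def thetaTerm (p x : ℂ) (j : ℤ) : ℂ := p ^ (j * (j - 1) / 2) * x ^ j

/-- The finite `q`-Pochhammer symbol `(p; p)_n`. -/
noncomputable def finPoch (p : ℂ) (n : ℕ) : ℂ := ∏ k ∈ Finset.range n, (1 - p * p ^ k)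

/-- The reciprocal `1 / (p; p)_k`, extended by zero to negative `k`. With this
convention the recurrence `recipPoch_sub_one` holds for every integer `k`. -/
noncomputable def recipPoch (p : ℂ) (k : ℤ) : ℂ := if 0 ≤ k then (finPoch p k.toNat)⁻¹ else 0

theorem finPoch_ne_zero {p : ℂ} (hp : ‖p‖ < 1) (n : ℕ) : finPoch p n ≠ 0 :=
  Finset.prod_ne_zero_iff.mpr fun k _ => one_sub_ne_zero_of_norm hp hp k

theorem recipPoch_sub_one {p : ℂ} (hp : ‖p‖ < 1) (k : ℤ) :
    recipPoch p (k - 1) = (1 - p ^ k) * recipPoch p k := by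
  rcases lt_trichotomy k 0 with h | h | h
  · rw [recipPoch, recipPoch, if_neg (by omega), if_neg (by omega), mul_zero]
  · subst h; simp [recipPoch]
  · obtain ⟨n, rfl⟩ : ∃ n : ℕ, k = n + 1 := ⟨(k - 1).toNat, by omega⟩
    have h0 := one_sub_ne_zero_of_norm hp hp n
    have h1 : recipPoch p (n + 1 : ℤ) = (finPoch p (n + 1))⁻¹ := by
      simp only [recipPoch, if_pos h.le]; rfl
    have h2 : (p : ℂ) ^ (n + 1 : ℤ) = p * p ^ n := by
      rw [mul_comm, ← pow_succ]; exact_mod_cast rfl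
    rw [h1, h2, finPoch, Finset.prod_range_succ, ← finPoch, mul_inv, add_sub_cancel_right]
    simp only [recipPoch, Int.natCast_nonneg, if_true, Int.toNat_natCast]
    field_simp

theorem thetaTerm_succ {p x : ℂ} (hp : p ≠ 0) (hx : x ≠ 0) (j : ℤ) :
    thetaTerm p x (j + 1) = thetaTerm p x j * (p ^ j * x) := by
  have : (j + 1) * (j + 1 - 1) / 2 = j * (j - 1) / 2 + j := by
    rw [show (j + 1) * (j + 1 - 1) = j * (j - 1) + j * 2 by ring]
    exact Int.add_mul_ediv_right _ _ two_ne_zero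
  rw [thetaTerm, thetaTerm, this, zpow_add₀ hp, zpow_add_one₀ hx]; ring

theorem thetaTerm_pred {p x : ℂ} (hp : p ≠ 0) (hx : x ≠ 0) (j : ℤ) :
    thetaTerm p x (j - 1) = thetaTerm p x j * (p / (p ^ j * x)) := by
  have h := thetaTerm_succ hp hx (j - 1)
  rw [sub_add_cancel, zpow_sub_one₀ hp] at h
  have := zpow_ne_zero j hp
  rw [h]; field_simp

theorem thetaTerm_ne_zero {p x : ℂ} (hp : p ≠ 0) (hx : x ≠ 0) (j : ℤ) : thetaTerm p x j ≠ 0 :=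
  mul_ne_zero (zpow_ne_zero _ hp) (zpow_ne_zero _ hx)

theorem summable_thetaTerm {p x : ℂ} (hp0 : p ≠ 0) (hp : ‖p‖ < 1) (hx : x ≠ 0) :
    Summable (thetaTerm p x) := by
  have hlim : ∀ c : ℂ, Filter.Tendsto (fun n : ℕ => ‖p ^ n * c‖) Filter.atTop (nhds 0) := by
    intro c
    have := ((tendsto_pow_atTop_nhds_zero_of_norm_lt_one hp).mul_const c).norm
    simpa using this
  apply Summable.of_nat_of_neg
  · refine summable_of_ratio_test_tendsto_lt_one zero_lt_one
      (Filter.Eventually.of_forall fun n => thetaTerm_ne_zero hp0 hx _) ((hlim x).congr fun n => ?_)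
    have := thetaTerm_ne_zero hp0 hx n
    rw [Nat.cast_succ, thetaTerm_succ hp0 hx, ← norm_div, mul_div_cancel_left₀ _ this]
    simp
  · refine summable_of_ratio_test_tendsto_lt_one zero_lt_one
      (Filter.Eventually.of_forall fun n => thetaTerm_ne_zero hp0 hx _)
      ((hlim (p / x)).congr fun n => ?_)
    have := thetaTerm_ne_zero hp0 hx (-n)
    rw [Nat.cast_succ, neg_add, ← sub_eq_add_neg, thetaTerm_pred hp0 hx, ← norm_div,
      mul_div_cancel_left₀ _ this, zpow_neg, zpow_natCast]
    congr 1
    field_simp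

/-- The finite form of the Jacobi triple product, with the Gaussian binomial coefficient
`[2n, n + j]` divided by `(p; p)_{2n}`. The extension of `recipPoch` by zero makes the sum range
over all integers, so that the induction needs no boundary terms. -/
theorem finite_triple_product {p x : ℂ} (hp0 : p ≠ 0) (hp : ‖p‖ < 1) (hx : x ≠ 0) (n : ℕ) :
    HasSum (fun j : ℤ => thetaTerm p x j * (recipPoch p (n - j) * recipPoch p (n + j)))
      (((∏ k ∈ Finset.range n, (1 - -x * p ^ k)) * ∏ k ∈ Finset.range n, (1 - -(p / x) * p ^ k))
        / finPoch p (2 * n)) := by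
  induction n with
  | zero =>
    have h := hasSum_single (f := fun j : ℤ => thetaTerm p x j *
      (recipPoch p ((0 : ℕ) - j) * recipPoch p ((0 : ℕ) + j))) 0 (by
        intro j hj
        rcases lt_or_gt_of_ne hj with h | h
        · simp [recipPoch, show ¬ 0 ≤ j by omega]
        · simp [recipPoch, show ¬ j ≤ 0 by omega])
    simpa [thetaTerm, recipPoch, finPoch] using h
  | succ n ih =>
    -- The new factors multiply to `1 + p^(2n+1) + x p^n + p^(n+1)/x`, so the series for `n + 1` is a
    -- combination of that for `n` and its two shifts.
    set f := fun j : ℤ => thetaTerm p x j * (recipPoch p (n - j) * recipPoch p (n + j)) with hf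
    have hm := (Equiv.subRight (1 : ℤ)).hasSum_iff.mpr ih
    have hpl := (Equiv.addRight (1 : ℤ)).hasSum_iff.mpr ih
    have hs := ((ih.mul_left (1 + p * (p ^ n) ^ 2)).add ((hm.mul_left (x * p ^ n)).add
      (hpl.mul_left (p * p ^ n / x)))).div_const
        ((1 - p * (p ^ n) ^ 2) * (1 - p ^ 2 * (p ^ n) ^ 2))
    have h1 : 1 - p * (p ^ n) ^ 2 ≠ 0 := by
      convert one_sub_ne_zero_of_norm hp hp (2 * n) using 2; ring
    have h2 : 1 - p ^ 2 * (p ^ n) ^ 2 ≠ 0 := by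
      convert one_sub_ne_zero_of_norm hp hp (2 * n + 1) using 2; ring
    have h3 := finPoch_ne_zero hp (2 * n)
    convert hs using 1
    · rfl
    · funext j
      simp only [Function.comp, Equiv.coe_addRight, Equiv.subRight_apply, hf]
      rw [thetaTerm_succ hp0 hx, thetaTerm_pred hp0 hx]
      have a1 := recipPoch_sub_one hp (n + 1 - j)
      have a2 := recipPoch_sub_one hp (n + 1 + j)
      have a3 := recipPoch_sub_one hp (n - j)
      have a4 := recipPoch_sub_one hp (n + j)
      rw [show (n + 1 - j - 1 : ℤ) = n - j by ring] at a1
      rw [show (n + 1 + j - 1 : ℤ) = n + j by ring] at a2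
      rw [show (n - (j - 1) : ℤ) = n + 1 - j by ring, show (n + (j - 1) : ℤ) = n + j - 1 by ring,
        show (n - (j + 1) : ℤ) = n - j - 1 by ring, show (n + (j + 1) : ℤ) = n + 1 + j by ring,
        a3, a4, a1, a2]
      push_cast
      have hJ := zpow_ne_zero j hp0
      rw [zpow_sub₀ hp0, zpow_sub₀ hp0, zpow_add₀ hp0 _ j, zpow_add₀ hp0 _ j, zpow_add₀ hp0, zpow_one,
        zpow_natCast]
      generalize p ^ j = J at *
      generalize p ^ n = N at *
      field_simp
      ring
    · have h4 : finPoch p (2 * (n + 1)) =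
          finPoch p (2 * n) * ((1 - p * (p ^ n) ^ 2) * (1 - p ^ 2 * (p ^ n) ^ 2)) := by
        rw [show 2 * (n + 1) = 2 * n + 1 + 1 by ring, finPoch, Finset.prod_range_succ,
          Finset.prod_range_succ, ← finPoch]
        ring
      rw [h4, Finset.prod_range_succ, Finset.prod_range_succ]
      generalize p ^ n = N at *
      field_simp
      ring

/-! ### The Jacobi triple product -/

theorem tendsto_recipPoch {p : ℂ} (hp : ‖p‖ < 1) :
    Filter.Tendsto (recipPoch p) Filter.atTop (nhds (qp p p)⁻¹) := by
  have h := (tendsto_qp p hp).inv₀ (qp_ne_zero hp hp)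
  have ht : Filter.Tendsto Int.toNat Filter.atTop Filter.atTop :=
    Filter.tendsto_atTop.mpr fun b => by
      filter_upwards [Filter.eventually_ge_atTop (b : ℤ)] with k hk; omega
  refine (h.comp ht).congr' ?_
  filter_upwards [Filter.eventually_ge_atTop (0 : ℤ)] with k hk
  simp [recipPoch, hk, finPoch]

/-- The uniform bound that supplies the dominating series for the triple product. -/
theorem recipPoch_bounded {p : ℂ} (hp : ‖p‖ < 1) : ∃ C, 0 ≤ C ∧ ∀ k, ‖recipPoch p k‖ ≤ C := by
  have h := (tendsto_qp p hp).inv₀ (qp_ne_zero hp hp)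
  obtain ⟨C, hC⟩ := (Metric.isBounded_range_of_tendsto _ h).exists_norm_le
  have hC0 : 0 ≤ C := (norm_nonneg _).trans (hC _ ⟨0, rfl⟩)
  refine ⟨C, hC0, fun k => ?_⟩
  unfold recipPoch
  split_ifs
  · exact hC _ ⟨k.toNat, rfl⟩
  · simpa using hC0

/-- The Jacobi triple product identity, obtained from its finite form by dominated convergence. -/
theorem triple_product {p x : ℂ} (hp0 : p ≠ 0) (hp : ‖p‖ < 1) (hx : x ≠ 0) :
    HasSum (thetaTerm p x) (qp p p * (qp (-x) p * qp (-(p / x)) p)) := by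
  obtain ⟨C, hC0, hC⟩ := recipPoch_bounded hp
  have hE := qp_ne_zero hp hp
  have hsum := summable_thetaTerm hp0 hp hx
  have hcast : Filter.Tendsto (fun n : ℕ => (n : ℤ)) Filter.atTop Filter.atTop :=
    tendsto_natCast_atTop_atTop
  have key := tendsto_tsum_of_dominated_convergence (𝓕 := Filter.atTop)
    (f := fun (n : ℕ) (j : ℤ) => thetaTerm p x j * (recipPoch p (n - j) * recipPoch p (n + j)))
    (g := fun j => thetaTerm p x j * ((qp p p)⁻¹ * (qp p p)⁻¹))
    (bound := fun j => ‖thetaTerm p x j‖ * (C * C)) (hsum.norm.mul_right _)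
    (fun j => by
      refine Filter.Tendsto.const_mul _ (Filter.Tendsto.mul ?_ ?_)
      · exact (tendsto_recipPoch hp).comp (Filter.tendsto_atTop_add_const_right _ (-j) hcast)
      · exact (tendsto_recipPoch hp).comp (Filter.tendsto_atTop_add_const_right _ j hcast))
    (Filter.Eventually.of_forall fun n j => by
      rw [norm_mul, norm_mul]
      gcongr <;> exact hC _)
  simp_rw [(finite_triple_product hp0 hp hx _).tsum_eq] at key
  have hdouble : Filter.Tendsto (fun n : ℕ => 2 * n) Filter.atTop Filter.atTop :=
    Filter.tendsto_id.const_mul_atTop' two_pos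
  have lim := ((tendsto_qp (-x) hp).mul (tendsto_qp (-(p / x)) hp)).div
    ((tendsto_qp p hp).comp hdouble) hE
  have heq := tendsto_nhds_unique key lim
  rw [tsum_mul_right] at heq
  have : ∑' j, thetaTerm p x j = qp p p * (qp (-x) p * qp (-(p / x)) p) := by
    field_simp at heq
    linear_combination heq
  rw [← this]
  exact hsum.hasSum

/-! ### Adding products of theta functions -/

/-- Under `n = a + b`, `m = a - b` a product of two theta terms to the base `p` becomes a product
of theta terms to the base `p²`. -/
theorem thetaTerm_mul_thetaTerm {p x y : ℂ} (hp : p ≠ 0) (hx : x ≠ 0) (hy : y ≠ 0) (a b : ℤ) :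
    thetaTerm p x (a + b) * thetaTerm p y (a - b) =
      thetaTerm (p ^ 2) (x * y) a * thetaTerm (p ^ 2) (p * x / y) b := by
  have hdiv : ∀ j : ℤ, 2 * (j * (j - 1) / 2) = j * (j - 1) := fun j =>
    Int.mul_ediv_cancel' (by simpa [mul_comm] using (Int.even_mul_pred_self j).two_dvd)
  have hexp : (a + b) * (a + b - 1) / 2 + (a - b) * (a - b - 1) / 2 =
      2 * (a * (a - 1) / 2) + (2 * (b * (b - 1) / 2) + b) := by
    have := hdiv (a + b); have := hdiv (a - b); have := hdiv a; have := hdiv b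
    have : (a + b) * (a + b - 1) + (a - b) * (a - b - 1) = 2 * (a * (a - 1)) +
      2 * (b * (b - 1) + b) := by ring
    linarith
  have h2 : ∀ j : ℤ, (p ^ 2) ^ j = p ^ (2 * j) := fun j => by
    rw [zpow_mul]; rfl
  simp only [thetaTerm]
  rw [h2, h2, mul_mul_mul_comm, ← zpow_add₀ hp, hexp, zpow_add₀ hp, zpow_add₀ hp, zpow_add₀ hx,
    zpow_sub₀ hy, div_zpow, mul_zpow, mul_zpow]
  have := zpow_ne_zero b hy
  field_simp

/-- Adding the two products cancels the terms whose indices differ in parity, and the remaining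
terms are indexed by `(a + b, a - b)`. -/
theorem tsum_theta_add {p x y : ℂ} (hp0 : p ≠ 0) (hp : ‖p‖ < 1) (hx : x ≠ 0) (hy : y ≠ 0) :
    (∑' j, thetaTerm p x j) * (∑' j, thetaTerm p (-y) j) +
      (∑' j, thetaTerm p (-x) j) * (∑' j, thetaTerm p y j) =
    2 * ((∑' j, thetaTerm (p ^ 2) (-(x * y)) j) *
      ∑' j, thetaTerm (p ^ 2) (-(p * x / y)) j) := by
  have hmul : ∀ {r u v : ℂ}, r ≠ 0 → ‖r‖ < 1 → u ≠ 0 → v ≠ 0 →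
      HasSum (fun z : ℤ × ℤ => thetaTerm r u z.1 * thetaTerm r v z.2)
        ((∑' j, thetaTerm r u j) * ∑' j, thetaTerm r v j) := by
    intro r u v hr0 hr hu hv
    have hu' := summable_thetaTerm hr0 hr hu
    have hv' := summable_thetaTerm hr0 hr hv
    exact hu'.hasSum.mul hv'.hasSum (summable_mul_of_summable_norm hu'.norm hv'.norm)
  have hneg : ∀ (r u : ℂ) (j : ℤ), thetaTerm r (-u) j = (-1) ^ j * thetaTerm r u j := by
    intro r u j
    rw [thetaTerm, thetaTerm, neg_eq_neg_one_mul, mul_zpow]; ring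
  have hL := (hmul hp0 hp hx (neg_ne_zero.mpr hy)).add (hmul hp0 hp (neg_ne_zero.mpr hx) hy)
  have hinj : Function.Injective fun z : ℤ × ℤ => (z.1 + z.2, z.1 - z.2) := by
    rintro ⟨a, b⟩ ⟨c, d⟩ h
    simp only [Prod.mk.injEq] at h ⊢
    omega
  -- The range of `(a, b) ↦ (a + b, a - b)` is the set of index pairs of equal parity.
  rw [← hinj.hasSum_iff] at hL
  · have hp2 := norm_sq_lt_one hp
    have hR := (hmul (pow_ne_zero 2 hp0) hp2 (neg_ne_zero.mpr (mul_ne_zero hx hy))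
      (neg_ne_zero.mpr (div_ne_zero (mul_ne_zero hp0 hx) hy))).mul_left 2
    refine hL.unique (hR.congr_fun ?_)
    rintro ⟨a, b⟩
    simp only [Function.comp, hneg]
    have h1 : (-1 : ℂ) ^ (a + b) = (-1) ^ a * (-1) ^ b := zpow_add₀ (by norm_num) a b
    have h2 : (-1 : ℂ) ^ (a - b) = (-1) ^ a * (-1) ^ b := by
      rw [sub_eq_add_neg, zpow_add₀ (by norm_num), zpow_neg, ← inv_zpow, inv_neg_one]
    rw [h1, h2]
    linear_combination 2 * (-1) ^ a * (-1) ^ b * thetaTerm_mul_thetaTerm hp0 hx hy a b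
  · rintro ⟨n, m⟩ hz
    have hodd : Odd (n + m) := by
      rw [← Int.not_even_iff_odd]
      rintro ⟨a, ha⟩
      exact hz ⟨(a, n - a), by simp; omega⟩
    simp only [hneg]
    have : ((-1 : ℂ) ^ n) + (-1) ^ m = 0 := by
      rcases Int.even_or_odd n with h | h
      · have h' : Odd m := by
          rw [add_comm, Int.odd_add] at hodd; exact hodd.mpr h
        rw [h.neg_one_zpow, h'.neg_one_zpow]; ring
      · have h' : Even m := by
          rw [Int.odd_add] at hodd; exact hodd.mp h
        rw [h.neg_one_zpow, h'.neg_one_zpow]; ring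
    linear_combination thetaTerm p x n * thetaTerm p y m * this

/-- The theta function identity behind the theorem: with `θ(x; p) = (x; p)_∞ (p/x; p)_∞`,
it reads `θ(-q; q⁵) θ(q²; q⁵) + θ(q; q⁵) θ(-q²; q⁵) = 2 θ(q³; q¹⁰) θ(q⁴; q¹⁰) / (q⁵; q¹⁰)_∞²`. -/
theorem theta_identity {q : ℂ} (hq0 : q ≠ 0) (hq : ‖q‖ < 1) :
    ((qp (-q) (q ^ 5) * qp (-q ^ 4) (q ^ 5)) * (qp (q ^ 2) (q ^ 5) * qp (q ^ 3) (q ^ 5)) +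
      (qp q (q ^ 5) * qp (q ^ 4) (q ^ 5)) * (qp (-q ^ 2) (q ^ 5) * qp (-q ^ 3) (q ^ 5))) *
        qp (q ^ 5) (q ^ 10) ^ 2 =
    2 * ((qp (q ^ 3) (q ^ 10) * qp (q ^ 7) (q ^ 10)) *
      (qp (q ^ 4) (q ^ 10) * qp (q ^ 6) (q ^ 10))) := by
  have hp0 : q ^ 5 ≠ 0 := pow_ne_zero _ hq0
  have hp : ‖q ^ 5‖ < 1 := by
    rw [norm_pow]; exact pow_lt_one₀ (norm_nonneg _) hq (by norm_num)
  have hP : ‖q ^ 10‖ < 1 := by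
    rw [norm_pow]; exact pow_lt_one₀ (norm_nonneg _) hq (by norm_num)
  have hP0 : q ^ 10 ≠ 0 := pow_ne_zero _ hq0
  have h := tsum_theta_add hp0 hp hq0 (pow_ne_zero 2 hq0)
  rw [← pow_mul] at h
  norm_num only at h
  rw [show q ^ 5 * q / q ^ 2 = q ^ 4 by field_simp, show q * q ^ 2 = q ^ 3 by ring] at h
  have hq' : -q ≠ 0 := neg_ne_zero.mpr hq0
  have e : ∀ i : ℕ, q ^ i ≠ 0 := fun i => pow_ne_zero i hq0
  have e' : ∀ i : ℕ, -q ^ i ≠ 0 := fun i => neg_ne_zero.mpr (e i)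
  rw [(triple_product hp0 hp hq0).tsum_eq, (triple_product hp0 hp (e' 2)).tsum_eq,
    (triple_product hp0 hp hq').tsum_eq, (triple_product hp0 hp (e 2)).tsum_eq,
    (triple_product hP0 hP (e' 3)).tsum_eq, (triple_product hP0 hP (e' 4)).tsum_eq] at h
  simp only [neg_neg, div_neg] at h
  rw [show q ^ 5 / q = q ^ 4 by field_simp, show q ^ 5 / q ^ 2 = q ^ 3 by field_simp,
    show q ^ 10 / q ^ 3 = q ^ 7 by field_simp, show q ^ 10 / q ^ 4 = q ^ 6 by field_simp] at h
  -- The quotient of the prefactors `(p; p)_∞²` and `(p²; p²)_∞²` is `(p; p²)_∞²`.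
  have hE : qp (q ^ 5) (q ^ 5) = qp (q ^ 5) (q ^ 10) * qp (q ^ 10) (q ^ 10) := by
    rw [qp_even_odd _ hp]; ring_nf
  have hne : qp (q ^ 10) (q ^ 10) ^ 2 ≠ 0 := pow_ne_zero _ (qp_ne_zero hP hP)
  rw [hE] at h
  refine mul_right_cancel₀ hne ?_
  linear_combination h

/-! ### The identity for the Rogers–Ramanujan products -/

theorem stmt2 (q : ℂ) (hq : ‖q‖ < 1) :
    GG q ^ 2 * HH (q ^ 2) + GG (q ^ 2) * HH q ^ 2 =
      2 * GG q * GG (q ^ 2) ^ 2 / qp (q ^ 5) (q ^ 10) ^ 2 := by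
  by_cases hq0 : q = 0
  -- At `q = 0`, where the triple product is unavailable, all the products equal one.
  · subst hq0
    simp [GG, HH, qp]
    norm_num
  have hpow : ∀ i : ℕ, i ≠ 0 → ‖q ^ i‖ < 1 := fun i hi => by
    rw [norm_pow]; exact pow_lt_one₀ (norm_nonneg _) hq hi
  have hp := hpow 5 (by norm_num)
  have hP := hpow 10 (by norm_num)
  have key := theta_identity hq0 hq
  have sq : ∀ a : ℂ, qp (a ^ 2) (q ^ 10) = qp a (q ^ 5) * qp (-a) (q ^ 5) := fun a => by
    rw [qp_mul_neg a hp]; ring_nf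
  have split : ∀ a : ℂ, qp a (q ^ 5) = qp a (q ^ 10) * qp (a * q ^ 5) (q ^ 10) := fun a => by
    rw [qp_even_odd a hp]; ring_nf
  have b2 := sq q
  have b8 := sq (q ^ 4)
  have b4 := sq (q ^ 2)
  have b6 := sq (q ^ 3)
  have d2 := split (q ^ 2)
  have d3 := split (q ^ 3)
  simp only [← pow_mul, ← pow_add] at b8 b4 b6 d2 d3
  norm_num only at b8 b4 b6 d2 d3
  have n1 := qp_ne_zero hq hp
  have n4 := qp_ne_zero (hpow 4 (by norm_num)) hp
  have n2 := qp_ne_zero (hpow 2 (by norm_num)) hp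
  have n3 := qp_ne_zero (hpow 3 (by norm_num)) hp
  have m2 := qp_ne_zero (hpow 2 (by norm_num)) hP
  have m4 := qp_ne_zero (hpow 4 (by norm_num)) hP
  have m6 := qp_ne_zero (hpow 6 (by norm_num)) hP
  have m8 := qp_ne_zero (hpow 8 (by norm_num)) hP
  have m5 := qp_ne_zero hp hP
  simp only [GG, HH, ← pow_mul]
  norm_num only
  rw [b4, b6] at key
  rw [b2] at m2
  rw [b4] at m4
  rw [b6] at m6
  rw [b8] at m8
  rw [b2] at d2
  rw [b8] at d3
  rw [b2, b4, b6, b8]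
  -- Only a rational identity between the individual products remains.
  generalize qp q (q ^ 5) = a1 at *
  generalize qp (q ^ 2) (q ^ 5) = a2 at *
  generalize qp (q ^ 3) (q ^ 5) = a3 at *
  generalize qp (q ^ 4) (q ^ 5) = a4 at *
  generalize qp (-q) (q ^ 5) = e1 at *
  generalize qp (-q ^ 2) (q ^ 5) = e2 at *
  generalize qp (-q ^ 3) (q ^ 5) = e3 at *
  generalize qp (-q ^ 4) (q ^ 5) = e4 at *
  generalize qp (q ^ 3) (q ^ 10) = c3 at *
  generalize qp (q ^ 5) (q ^ 10) = c5 at *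
  generalize qp (q ^ 7) (q ^ 10) = c7 at *
  have k1 := right_ne_zero_of_mul m2
  have k2 := right_ne_zero_of_mul m4
  have k3 := right_ne_zero_of_mul m6
  have k4 := right_ne_zero_of_mul m8
  clear m2 m4 m6 m8 b2 b4 b6 b8
  field_simp
  linear_combination (a1 * a4 * e1 * e4) * key -
    2 * a2 * e2 * a3 * e3 * (a3 * d2 + a1 * e1 * c7 * d3)
end
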